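/- Let G = N_{3,4}, let f : H → G be a homomorphism from a finite-index subgroup H of G, let m, n, k, j be positive integers with aᵐ, bⁿ, cᵏ, dʲ ∈ H, let K = ⟨aᵐ, bⁿ, cᵏ, dʲ⟩, and let N_f be the associated 4×4 integer exponent matrix. If det(N_f) ≠ 0, then f(Z(K)) ≤ Z(K), where Z(K) is the center of K. -/

import Mathlib

/-!
The relations force `N_{3,4}` to have class three, with derived subgroup free abelian on nine
commutators; hence it embeds in the Baker-Campbell-Hausdorff group of a rational Lie algebra of
dimension 13, whose generators have weight one. A homomorphism from a subgroup containing powers of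
the generators extends to a Lie endomorphism `θ`, because the rational lines through the logarithms
of its graph form a Lie subalgebra which is again a graph. In weight one, `θ` is `N_f` with its rows
divided by `m, n, k, j`. The defining relations are so rigid that `θ` is the identity in weight one
as soon as this matrix is nonsingular, and then `θ` fixes the weight-three part. An element of
`Z(K)` commutes with powers of all four generators, so its logarithm has weight three and `f` fixes
it.
-/

/-- The commutator `[x, y] = x⁻¹ y⁻¹ x y`. -/
def cmt {G : Type*} [Group G] (x y : G) : G := x⁻¹ * y⁻¹ * x * y

/-- The defining relators of the Bludov–Gusev group `N_{3,4}` on generators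
`a, b, c, d` (indexed by `0, 1, 2, 3`). -/
def N34Rels : Set (FreeGroup (Fin 4)) :=
  let a : FreeGroup (Fin 4) := FreeGroup.of 0
  let b : FreeGroup (Fin 4) := FreeGroup.of 1
  let c : FreeGroup (Fin 4) := FreeGroup.of 2
  let d : FreeGroup (Fin 4) := FreeGroup.of 3
  {cmt a (cmt a b), cmt (cmt a b) b, cmt a (cmt c d), cmt (cmt a d) d,
   cmt b (cmt b c), cmt b (cmt c d), cmt c (cmt c d), cmt (cmt c d) d,
   cmt a (cmt b c) * cmt (cmt a c) b,
   cmt a (cmt b d) * cmt (cmt a d) b,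
   cmt a (cmt a d) * (cmt (cmt b c) c)⁻¹,
   cmt a (cmt a c) * (cmt b (cmt b d))⁻¹,
   cmt (cmt a c) b * (cmt (cmt b d) d)⁻¹,
   cmt (cmt a c) c * (cmt (cmt b d) c)⁻¹,
   cmt (cmt a d) b * (cmt (cmt a d) c)⁻¹,
   cmt a b * (cmt (cmt a c) c)⁻¹,
   cmt c d * (cmt a (cmt a c))⁻¹}

/-- The Bludov–Gusev group `N_{3,4}`, presented on generators `a, b, c, d`. -/
abbrev N34 : Type := PresentedGroup N34Rels

/-- The generator `a` of `N_{3,4}`. -/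
def ga : N34 := PresentedGroup.of 0
/-- The generator `b` of `N_{3,4}`. -/
def gb : N34 := PresentedGroup.of 1
/-- The generator `c` of `N_{3,4}`. -/
def gc : N34 := PresentedGroup.of 2
/-- The generator `d` of `N_{3,4}`. -/
def gd : N34 := PresentedGroup.of 3

/-! ### Commutator identities -/

section Commutators

variable {G : Type*} [Group G] {e e' g h k s t : G}

theorem cmt_eq_one_iff : cmt g h = 1 ↔ Commute g h := by
  rw [cmt, mul_assoc, ← mul_inv_rev, inv_mul_eq_one, eq_comm, Commute, SemiconjBy]

theorem cmt_mem {K : Subgroup G} (hg : g ∈ K) (hh : h ∈ K) :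
    cmt g h ∈ K :=
  mul_mem (mul_mem (mul_mem (inv_mem hg) (inv_mem hh)) hg) hh

theorem cmt_inv (g h : G) : (cmt g h)⁻¹ = cmt h g := by
  simp [cmt, mul_assoc]

theorem map_cmt {H : Type*} [Group H] (f : G →* H) (g h : G) :
    f (cmt g h) = cmt (f g) (f h) := by
  simp [cmt]

theorem mul_cmt (g h : G) : g * cmt g h = h⁻¹ * g * h := by
  simp [cmt, mul_assoc]

theorem mul_mul_cmt (g h : G) : h * g * cmt g h = g * h := by
  simp [cmt, mul_assoc]

theorem cmt_inv_left (h : Commute e (cmt e g)) : cmt e⁻¹ g = (cmt e g)⁻¹ := by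
  rw [← h.inv_right.mul_inv_cancel]
  simp [cmt, mul_assoc]

theorem commute_cmt (hg : Commute t g) (hh : Commute t h) : Commute t (cmt g h) :=
  ((hg.inv_right.mul_right hh.inv_right).mul_right hg).mul_right hh

theorem commute_mul_iff_left (ht : Commute k t) : Commute k (s * t) ↔ Commute k s :=
  ⟨fun h => by simpa using h.mul_right ht.inv_right, fun h => h.mul_right ht⟩

theorem commute_mul_iff_right (hs : Commute k s) : Commute k (s * t) ↔ Commute k t :=
  ⟨fun h => by simpa using hs.inv_right.mul_right h, hs.mul_right⟩

theorem commute_mul_cmt_iff (e e' g : G) :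
    Commute (e * cmt e g) (e' * cmt e' g) ↔ Commute e e' := by
  rw [mul_cmt, mul_cmt]
  simpa using Commute.conj_iff (a := e) (b := e') g⁻¹

theorem commute_of_commute_cmt (hs : cmt e g = s) (ht : cmt e' g = t) (hee' : Commute e e')
    (hse' : Commute s e') (hst : Commute s t) : Commute e t := by
  subst hs ht
  have hconj := (commute_mul_cmt_iff e e' g).2 hee'
  have he := (commute_mul_iff_left (hse'.mul_right hst).symm).1 hconj.symm
  exact (commute_mul_iff_right hee').1 he.symm

/- Both sides come from the conjugate of `e` by `g * h = h * g * cmt g h`. -/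
theorem cmt_mul_conj_eq (hk : cmt g h = k) (hs : cmt e g = s) (ht : cmt e h = t) :
    k * (e * t * s * cmt s h) = e * s * t * cmt t g * k := by
  subst hk hs ht
  simp [cmt, mul_assoc]

theorem mul_mul_cmt_eq_of_commute (hk : cmt g h = k) (hs : cmt e g = s) (ht : cmt e h = t)
    (hke : Commute k e) (hks : Commute k s) (hkt : Commute k t) :
    t * s * (k * cmt s h) = s * t * (cmt t g * k) := by
  have hconj := cmt_mul_conj_eq hk hs ht
  rw [← mul_assoc, ((hke.mul_right hkt).mul_right hks).eq] at hconj
  simpa only [mul_assoc, mul_right_inj] using hconj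

theorem commute_mul_mul_of_commute (hk : cmt g h = k) (hs : cmt e g = s) (ht : cmt e h = t)
    (hhs : Commute h s) (hgt : Commute g t) (hst : Commute s t) : Commute k (e * s * t) := by
  have hconj := cmt_mul_conj_eq hk hs ht
  rwa [cmt_eq_one_iff.2 hhs.symm, cmt_eq_one_iff.2 hgt.symm, mul_one, mul_one,
    mul_assoc, ← hst.eq, ← mul_assoc e] at hconj

theorem commute_right_of_commute (hk : cmt g h = k) (hs : cmt e g = s) (ht : cmt e h = t)
    (hke : Commute k e) (hks : Commute k s) (hkt : Commute k t) (hst : Commute s t)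
    (hhs : Commute h s) : Commute g t := by
  have hconj := mul_mul_cmt_eq_of_commute hk hs ht hke hks hkt
  rw [cmt_eq_one_iff.2 hhs.symm, hst.eq, mul_one, mul_right_inj, eq_comm, mul_eq_right] at hconj
  exact (cmt_eq_one_iff.1 hconj).symm

theorem commute_left_of_commute (hk : cmt g h = k) (hs : cmt e g = s) (ht : cmt e h = t)
    (hke : Commute k e) (hks : Commute k s) (hkt : Commute k t) (hst : Commute s t)
    (hgt : Commute g t) : Commute h s := by
  have hconj := mul_mul_cmt_eq_of_commute hk hs ht hke hks hkt
  rw [cmt_eq_one_iff.2 hgt.symm, hst.eq, one_mul, mul_right_inj, mul_eq_left] at hconj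
  exact (cmt_eq_one_iff.1 hconj).symm

theorem commute_of_mul_cmt_eq (hk : cmt g h = k) (hs : cmt e g = s) (ht : cmt e h = t)
    (hkg : Commute k g) (hkh : Commute k h) (hst : t * s * cmt s h = s * t * cmt t g) :
    Commute k e := by
  have hconj := cmt_mul_conj_eq hk hs ht
  rw [mul_assoc e, mul_assoc e, hst, ← mul_assoc e, ← mul_assoc e] at hconj
  have hgh : e * s * t * cmt t g = (h * g)⁻¹ * e * (h * g) := by
    subst hs ht
    simp [cmt, mul_assoc]
  have hcomm := (Commute.conj_iff (h * g)).2 (show Commute k _ from hconj)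
  rw [((hkh.mul_right hkg).symm).mul_inv_cancel, hgh] at hcomm
  simpa [mul_assoc] using hcomm

theorem commutator_closure_le {S T : Set G} {N : Subgroup G} [N.Normal]
    (h : ∀ s ∈ S, ∀ t ∈ T, cmt s t ∈ N) :
    ⁅Subgroup.closure S, Subgroup.closure T⁆ ≤ N := by
  rw [← QuotientGroup.ker_mk' N, ← Subgroup.map_eq_bot_iff, Subgroup.map_commutator,
    Subgroup.commutator_eq_bot_iff_le_centralizer, MonoidHom.map_closure, MonoidHom.map_closure,
    Subgroup.centralizer_closure, Subgroup.closure_le]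
  rintro _ ⟨s, hs, rfl⟩ _ ⟨t, ht, rfl⟩
  have hst := (QuotientGroup.eq_one_iff _).2 (h s hs t ht)
  rw [← QuotientGroup.mk'_apply, map_cmt, cmt_eq_one_iff] at hst
  exact hst.symm.eq

end Commutators

theorem injective_of_linearIndependent {ι A V : Type*} [Finite ι] [CommGroup A] [AddCommGroup V]
    {s : ι → A} (hs : Subgroup.closure (Set.range s) = ⊤) {T : A →* Multiplicative V}
    (hT : LinearIndependent ℤ fun i => (T (s i)).toAdd) : Function.Injective T := by
  cases nonempty_fintype ι
  refine (injective_iff_map_eq_one T).2 fun g hg => ?_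
  obtain ⟨n, rfl⟩ := Subgroup.exists_of_mem_closure_range s g (hs ▸ Subgroup.mem_top g)
  have hn : ∑ i, n i • (T (s i)).toAdd = 0 := by
    simpa [map_prod, toAdd_prod] using congrArg Multiplicative.toAdd hg
  simp [Fintype.linearIndependent_iff.1 hT n hn]

/-! ### The Baker-Campbell-Hausdorff group in class three -/

/-- Lie rings that are nilpotent of class at most three. The Baker-Campbell-Hausdorff series
terminates on them after the terms of degree three. -/
class ThreeStepLie (L : Type*) [LieRing L] : Prop where
  lie_lie_lie_right (w x y z : L) : ⁅w, ⁅x, ⁅y, z⁆⁆⁆ = 0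

attribute [simp] ThreeStepLie.lie_lie_lie_right

open ThreeStepLie

instance {L L' : Type*} [LieRing L] [LieRing L'] [ThreeStepLie L] [ThreeStepLie L'] :
    ThreeStepLie (L × L') where
  lie_lie_lie_right _ _ _ _ := by
    ext <;> exact lie_lie_lie_right ..

/-- The group attached to a rational Lie algebra `L` of class at most three: a copy of `L` with the
Baker-Campbell-Hausdorff product `log (g * h) = X + Y + ½[X,Y] + ¹⁄₁₂([X,[X,Y]] + [Y,[Y,X]])`, where
`X = log g` and `Y = log h`. -/
@[ext] structure BCH (L : Type*) where
  exp ::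
  log : L

namespace BCH

section Group

variable {L : Type*} [LieRing L]

instance : One (BCH L) := ⟨exp 0⟩

instance : Inv (BCH L) := ⟨fun g => exp (-g.log)⟩

theorem log_one : (1 : BCH L).log = 0 := rfl

theorem log_inv (g : BCH L) : g⁻¹.log = -g.log := rfl

theorem log_eq_zero {g : BCH L} : g.log = 0 ↔ g = 1 := BCH.ext_iff.symm

variable [LieAlgebra ℚ L]

noncomputable instance : Mul (BCH L) where
  mul g h := exp (g.log + h.log + (1 / 2 : ℚ) • ⁅g.log, h.log⁆ +
    (1 / 12 : ℚ) • (⁅g.log, ⁅g.log, h.log⁆⁆ + ⁅h.log, ⁅h.log, g.log⁆⁆))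

theorem log_mul (g h : BCH L) : (g * h).log = g.log + h.log + (1 / 2 : ℚ) • ⁅g.log, h.log⁆ +
    (1 / 12 : ℚ) • (⁅g.log, ⁅g.log, h.log⁆⁆ + ⁅h.log, ⁅h.log, g.log⁆⁆) := rfl

theorem log_mul_of_lie_eq_zero {g h : BCH L} (hgh : ⁅g.log, h.log⁆ = 0) :
    (g * h).log = g.log + h.log := by
  have hhg : ⁅h.log, g.log⁆ = 0 := by rw [← lie_skew, hgh, neg_zero]
  simp [log_mul, hgh, hhg]

variable [ThreeStepLie L]

protected theorem mul_assoc (g h k : BCH L) : g * h * k = g * (h * k) := by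
  obtain ⟨x⟩ := g
  obtain ⟨y⟩ := h
  obtain ⟨z⟩ := k
  have jacobi := lie_jacobi x y z
  ext
  simp only [log_mul, lie_add, add_lie, lie_smul, smul_lie, smul_add, lie_lie, lie_lie_lie_right,
    ← lie_skew x y, ← lie_skew x z, ← lie_skew y z, lie_neg, lie_sub, smul_neg, neg_lie, sub_zero,
    smul_zero, lie_zero, neg_zero, add_zero] at jacobi ⊢
  linear_combination (norm := module) (1 / 12 : ℚ) • jacobi

noncomputable instance : Group (BCH L) :=
  Group.ofLeftAxioms BCH.mul_assoc (fun g => by ext; simp [log_mul, log_one])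
    (fun g => by ext; simp [log_mul, log_inv, log_one])

theorem log_pow (g : BCH L) (n : ℕ) : (g ^ n).log = n • g.log := by
  induction n with
  | zero => simp [log_one]
  | succ n ih => rw [pow_succ, log_mul_of_lie_eq_zero (by simp [ih]), ih, succ_nsmul]

theorem log_zpow (g : BCH L) (n : ℤ) : (g ^ n).log = n • g.log := by
  cases n with
  | ofNat n => simp [log_pow]
  | negSucc n => simp [log_pow, log_inv, zpow_negSucc]

theorem log_cmt (g h : BCH L) : (cmt g h).log = ⁅g.log, h.log⁆ +
    (1 / 2 : ℚ) • (⁅⁅g.log, h.log⁆, g.log⁆ + ⁅⁅g.log, h.log⁆, h.log⁆) := by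
  obtain ⟨x⟩ := g
  obtain ⟨y⟩ := h
  simp only [cmt, log_mul, log_inv, lie_add, add_lie, lie_smul, smul_lie, smul_add, lie_lie,
    lie_lie_lie_right, lie_self, ← lie_skew x y, lie_neg, neg_lie, neg_neg, smul_neg, sub_zero,
    smul_zero, lie_zero, zero_lie, neg_zero, add_zero, zero_add, lie_sub, sub_lie, smul_sub]
  module

theorem log_cmt_cmt (g h k : BCH L) : (cmt (cmt g h) k).log = ⁅⁅g.log, h.log⁆, k.log⁆ := by
  simp [log_cmt, -lie_skew]

theorem log_cmt_cmt_right (g h k : BCH L) :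
    (cmt g (cmt h k)).log = ⁅g.log, ⁅h.log, k.log⁆⁆ := by
  rw [← cmt_inv, log_inv, log_cmt_cmt, lie_skew]

theorem lie_log_eq_zero_of_commute {g h : BCH L} (hgh : Commute g h) : ⁅g.log, h.log⁆ = 0 := by
  have hcmt : (cmt g h).log = 0 := by rw [log_eq_zero, cmt_eq_one_iff.2 hgh]
  rw [log_cmt] at hcmt
  have hg : ⁅⁅g.log, h.log⁆, g.log⁆ = 0 := by
    simpa [-lie_skew] using congrArg (⁅·, g.log⁆) hcmt
  have hh : ⁅⁅g.log, h.log⁆, h.log⁆ = 0 := by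
    simpa [-lie_skew] using congrArg (⁅·, h.log⁆) hcmt
  simpa [hg, hh] using hcmt

/-- On a commutative group, a homomorphism to `BCH L` is additive in logarithmic coordinates. -/
noncomputable def logHom {A : Type*} [CommGroup A] (φ : A →* BCH L) : A →* Multiplicative L :=
  MonoidHom.mk' (fun g => .ofAdd (φ g).log) fun g h => by
    rw [map_mul, log_mul_of_lie_eq_zero (lie_log_eq_zero_of_commute ((Commute.all g h).map φ))]
    rfl

end Group

/-! ### Extending homomorphisms to rational Lie algebras -/

section RationalHull

variable {L : Type*} [LieRing L] [LieAlgebra ℚ L] [ThreeStepLie L] {Δ : Subgroup (BCH L)}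
  {X Y : L}

/-- The union of the rational lines through the logarithms of a subgroup; it is the underlying
set of the Lie subalgebra they generate. -/
def raySet (Δ : Subgroup (BCH L)) : Set L := {X | ∃ c : ℚ, ∃ g ∈ Δ, X = c • g.log}

theorem smul_mem_raySet (c : ℚ) (hX : X ∈ raySet Δ) : c • X ∈ raySet Δ := by
  obtain ⟨d, g, hg, rfl⟩ := hX
  exact ⟨c * d, g, hg, smul_smul c d _⟩

theorem smul_log_mem_raySet {g : BCH L} (hg : g ∈ Δ) (c : ℚ) : c • g.log ∈ raySet Δ :=
  ⟨c, g, hg, rfl⟩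

theorem log_mem_raySet {g : BCH L} (hg : g ∈ Δ) : g.log ∈ raySet Δ :=
  ⟨1, g, hg, (one_smul ℚ _).symm⟩

theorem exists_common_smul_log (hX : X ∈ raySet Δ) (hY : Y ∈ raySet Δ) :
    ∃ c : ℚ, ∃ g ∈ Δ, ∃ h ∈ Δ, X = c • g.log ∧ Y = c • h.log := by
  obtain ⟨p, g, hg, rfl⟩ := hX
  obtain ⟨q, h, hh, rfl⟩ := hY
  refine ⟨1 / (p.den * q.den), g ^ (p.num * q.den), zpow_mem hg _, h ^ (q.num * p.den),
    zpow_mem hh _, ?_, ?_⟩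
  · rw [log_zpow, ← Int.cast_smul_eq_zsmul ℚ, smul_smul]
    congr 1
    nth_rw 1 [← p.num_div_den]
    push_cast
    field_simp
  · rw [log_zpow, ← Int.cast_smul_eq_zsmul ℚ, smul_smul]
    congr 1
    nth_rw 1 [← q.num_div_den]
    push_cast
    field_simp

theorem add_mem_raySet_of_lie_eq_zero (hX : X ∈ raySet Δ) (hY : Y ∈ raySet Δ) (hXY : ⁅X, Y⁆ = 0) :
    X + Y ∈ raySet Δ := by
  obtain ⟨c, g, hg, h, hh, rfl, rfl⟩ := exists_common_smul_log hX hY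
  rcases eq_or_ne c 0 with rfl | hc
  · exact ⟨0, 1, one_mem _, by simp⟩
  have hgh : ⁅g.log, h.log⁆ = 0 := by simpa [hc] using hXY
  rw [← smul_add, ← log_mul_of_lie_eq_zero hgh]
  exact smul_log_mem_raySet (mul_mem hg hh) c

theorem lie_lie_mem_raySet {Z : L} (hX : X ∈ raySet Δ) (hY : Y ∈ raySet Δ) (hZ : Z ∈ raySet Δ) :
    ⁅⁅X, Y⁆, Z⁆ ∈ raySet Δ := by
  obtain ⟨p, g, hg, rfl⟩ := hX
  obtain ⟨q, h, hh, rfl⟩ := hY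
  obtain ⟨r, k, hk, rfl⟩ := hZ
  simp only [smul_lie, lie_smul, ← log_cmt_cmt]
  exact smul_mem_raySet _ (smul_mem_raySet _ (smul_log_mem_raySet (cmt_mem (cmt_mem hg hh) hk) _))

theorem lie_mem_raySet (hX : X ∈ raySet Δ) (hY : Y ∈ raySet Δ) : ⁅X, Y⁆ ∈ raySet Δ := by
  obtain ⟨p, g, hg, rfl⟩ := hX
  obtain ⟨q, h, hh, rfl⟩ := hY
  suffices ⁅g.log, h.log⁆ ∈ raySet Δ by
    simpa only [smul_lie, lie_smul] using smul_mem_raySet _ (smul_mem_raySet _ this)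
  have hX := log_mem_raySet hg
  have hY := log_mem_raySet hh
  have hXY := log_mem_raySet (cmt_mem hg hh)
  have expand : ⁅g.log, h.log⁆ = (cmt g h).log + (-1 / 2 : ℚ) • ⁅⁅g.log, h.log⁆, g.log⁆ +
      (-1 / 2 : ℚ) • ⁅⁅g.log, h.log⁆, h.log⁆ := by
    rw [log_cmt]
    module
  rw [expand]
  refine add_mem_raySet_of_lie_eq_zero (add_mem_raySet_of_lie_eq_zero hXY
    (smul_mem_raySet _ (lie_lie_mem_raySet hX hY hX)) ?_)
    (smul_mem_raySet _ (lie_lie_mem_raySet hX hY hY)) ?_ <;>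
    simp [-lie_skew]

theorem add_mem_raySet_of_lie_lie_eq_zero (hX : X ∈ raySet Δ) (hY : Y ∈ raySet Δ)
    (hXY : ⁅X, ⁅X, Y⁆⁆ = 0) (hYX : ⁅Y, ⁅Y, X⁆⁆ = 0) : X + Y ∈ raySet Δ := by
  obtain ⟨c, g, hg, h, hh, rfl, rfl⟩ := exists_common_smul_log hX hY
  rcases eq_or_ne c 0 with rfl | hc
  · exact ⟨0, 1, one_mem _, by simp⟩
  have hgh : ⁅g.log, ⁅g.log, h.log⁆⁆ = 0 := by simpa [hc] using hXY
  have hhg : ⁅h.log, ⁅h.log, g.log⁆⁆ = 0 := by simpa [hc] using hYX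
  have hhg' : ⁅h.log, ⁅g.log, h.log⁆⁆ = 0 := by rw [← lie_skew g.log, lie_neg, hhg, neg_zero]
  have expand : g.log + h.log = (g * h).log + (-1 / 2 : ℚ) • ⁅g.log, h.log⁆ := by
    rw [log_mul, hgh, hhg]
    module
  rw [← smul_add, expand]
  refine smul_mem_raySet c (add_mem_raySet_of_lie_eq_zero (log_mem_raySet (mul_mem hg hh))
    (smul_mem_raySet _ (lie_mem_raySet (log_mem_raySet hg) (log_mem_raySet hh))) ?_)
  simp [log_mul, hgh, hhg, hhg']

theorem add_mem_raySet (hX : X ∈ raySet Δ) (hY : Y ∈ raySet Δ) : X + Y ∈ raySet Δ := by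
  obtain ⟨c, g, hg, h, hh, rfl, rfl⟩ := exists_common_smul_log hX hY
  rw [← smul_add]
  apply smul_mem_raySet
  replace hX := log_mem_raySet hg
  replace hY := log_mem_raySet hh
  have hXY := lie_mem_raySet hX hY
  have correction : (-1 / 2 : ℚ) • ⁅g.log, h.log⁆ + (-1 / 12 : ℚ) • ⁅g.log, ⁅g.log, h.log⁆⁆ +
      (-1 / 12 : ℚ) • ⁅h.log, ⁅h.log, g.log⁆⁆ ∈ raySet Δ := by
    refine add_mem_raySet_of_lie_eq_zero (add_mem_raySet_of_lie_eq_zero (smul_mem_raySet _ hXY)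
      (smul_mem_raySet _ (lie_mem_raySet hX hXY)) ?_)
      (smul_mem_raySet _ (lie_mem_raySet hY (lie_mem_raySet hY hX))) ?_ <;>
      simp [-lie_skew]
  have expand : g.log + h.log = (g * h).log + ((-1 / 2 : ℚ) • ⁅g.log, h.log⁆ +
      (-1 / 12 : ℚ) • ⁅g.log, ⁅g.log, h.log⁆⁆ + (-1 / 12 : ℚ) • ⁅h.log, ⁅h.log, g.log⁆⁆) := by
    rw [log_mul]
    module
  rw [expand]
  apply add_mem_raySet_of_lie_lie_eq_zero (log_mem_raySet (mul_mem hg hh)) correction <;>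
    simp [log_mul, -lie_skew]

/-- The rational span of the logarithms of a subgroup, as a Lie subalgebra. -/
def rationalHull (Δ : Subgroup (BCH L)) : LieSubalgebra ℚ L where
  carrier := raySet Δ
  zero_mem' := ⟨0, 1, one_mem _, by simp⟩
  add_mem' := add_mem_raySet
  smul_mem' c _ := smul_mem_raySet c
  lie_mem' := lie_mem_raySet

end RationalHull

section Extension

variable {Γ L L' : Type*} [Group Γ] [LieRing L] [LieAlgebra ℚ L] [ThreeStepLie L]
  [LieRing L'] [LieAlgebra ℚ L'] [ThreeStepLie L']

/-- The homomorphism `g ↦ (ι g, F g)`, read in the group attached to the product Lie algebra. Its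
range is the graph of the correspondence `ι g ↦ F g`. -/
noncomputable def prodHom (ι : Γ →* BCH L) (F : Γ →* BCH L') : Γ →* BCH (L × L') :=
  MonoidHom.mk' (fun g => exp ((ι g).log, (F g).log)) fun g h => by
    ext <;> simp [log_mul]

theorem exists_lieHom_log_eq (ι : Γ →* BCH L) (F : Γ →* BCH L') (hι : Function.Injective ι)
    (hspan : LieSubalgebra.lieSpan ℚ L (Set.range fun g => (ι g).log) = ⊤) :
    ∃ θ : L →ₗ⁅ℚ⁆ L', ∀ g, θ (ι g).log = (F g).log := by
  let graph := rationalHull (prodHom ι F).range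
  let π : graph →ₗ⁅ℚ⁆ L := (LieHom.fst ℚ L L').comp graph.incl
  have mem_graph (g : Γ) : ((ι g).log, (F g).log) ∈ graph := log_mem_raySet ⟨g, rfl⟩
  have hinj : Function.Injective π := by
    refine (injective_iff_map_eq_zero π).2 ?_
    rintro ⟨_, c, _, ⟨g, rfl⟩, rfl⟩ hg
    ext1
    have hg : c • (ι g).log = 0 := hg
    rcases smul_eq_zero.1 hg with rfl | hg
    · exact zero_smul ℚ _
    · rw [log_eq_zero, map_eq_one_iff ι hι] at hg
      subst hg
      simp [log_one]
  have hsurj : Function.Surjective π := by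
    rw [← LieHom.range_eq_top, eq_top_iff, ← hspan, LieSubalgebra.lieSpan_le]
    rintro _ ⟨g, rfl⟩
    exact ⟨⟨_, mem_graph g⟩, rfl⟩
  let e := LieEquiv.ofBijective π ⟨hinj, hsurj⟩
  refine ⟨((LieHom.snd ℚ L L').comp graph.incl).comp e.symm.toLieHom, fun g => ?_⟩
  have symm_log : e.symm (ι g).log = ⟨_, mem_graph g⟩ := by
    rw [LieEquiv.symm_apply_eq]
    rfl
  exact congrArg (fun v : graph => v.1.2) symm_log

end Extension

end BCH

/-! ### The rational Lie algebra of `N_{3,4}` -/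

/-- The defining relations of `N_{3,4}`, read in a Lie ring. -/
structure N34LieRelations {L : Type*} [LieRing L] (a b c d : L) : Prop where
  lie_a_ab : ⁅a, ⁅a, b⁆⁆ = 0
  lie_ab_b : ⁅⁅a, b⁆, b⁆ = 0
  lie_a_cd : ⁅a, ⁅c, d⁆⁆ = 0
  lie_ad_d : ⁅⁅a, d⁆, d⁆ = 0
  lie_b_bc : ⁅b, ⁅b, c⁆⁆ = 0
  lie_b_cd : ⁅b, ⁅c, d⁆⁆ = 0
  lie_c_cd : ⁅c, ⁅c, d⁆⁆ = 0
  lie_cd_d : ⁅⁅c, d⁆, d⁆ = 0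
  abc : ⁅a, ⁅b, c⁆⁆ = -⁅⁅a, c⁆, b⁆
  abd : ⁅a, ⁅b, d⁆⁆ = -⁅⁅a, d⁆, b⁆
  aad : ⁅a, ⁅a, d⁆⁆ = ⁅⁅b, c⁆, c⁆
  aac : ⁅a, ⁅a, c⁆⁆ = ⁅b, ⁅b, d⁆⁆
  acb : ⁅⁅a, c⁆, b⁆ = ⁅⁅b, d⁆, d⁆
  acc : ⁅⁅a, c⁆, c⁆ = ⁅⁅b, d⁆, c⁆
  adb : ⁅⁅a, d⁆, b⁆ = ⁅⁅a, d⁆, c⁆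
  ab : ⁅a, b⁆ = ⁅⁅a, c⁆, c⁆
  cd : ⁅c, d⁆ = ⁅a, ⁅a, c⁆⁆

theorem N34LieRelations.map {L L' : Type*} [LieRing L] [LieRing L'] [LieAlgebra ℚ L]
    [LieAlgebra ℚ L'] {a b c d : L} (h : N34LieRelations a b c d) (θ : L →ₗ⁅ℚ⁆ L') :
    N34LieRelations (θ a) (θ b) (θ c) (θ d) := by
  obtain ⟨h₁, h₂, h₃, h₄, h₅, h₆, h₇, h₈, h₉, h₁₀, h₁₁, h₁₂, h₁₃, h₁₄, h₁₅, h₁₆, h₁₇⟩ := h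
  constructor <;> simp only [← LieHom.map_lie, ← map_neg, ← map_zero θ] <;>
    exact congrArg θ (by assumption)

/-- The rational Lie algebra of `N_{3,4}`. Write `A, B, C, D` for the generators, then
`X = ⁅A,C⁆`, `Y = ⁅A,D⁆`, `Z = ⁅B,C⁆`, `W = ⁅B,D⁆`, and `U = ⁅A,B⁆`, `V = ⁅C,D⁆`, `P = ⁅X,B⁆`,
`Q = ⁅A,Y⁆`, `R = ⁅Y,B⁆`. The three fields are the coordinates along `A, …, D`, along `X, …, W`, and
along the central elements `U, V, P, Q, R`. -/
@[ext] structure N34Lie where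
  wt₁ : Fin 4 → ℚ
  wt₂ : Fin 4 → ℚ
  wt₃ : Fin 5 → ℚ

namespace N34Lie

/-- The coordinates of `N34Lie`, from which its vector space structure is transported. -/
@[simps]
def toProd : N34Lie ≃ (Fin 4 → ℚ) × (Fin 4 → ℚ) × (Fin 5 → ℚ) where
  toFun x := (x.wt₁, x.wt₂, x.wt₃)
  invFun x := ⟨x.1, x.2.1, x.2.2⟩

noncomputable instance : AddCommGroup N34Lie := toProd.addCommGroup

noncomputable instance : Module ℚ N34Lie := toProd.module ℚ

@[simp] theorem wt₁_zero : (0 : N34Lie).wt₁ = 0 := rfl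
@[simp] theorem wt₂_zero : (0 : N34Lie).wt₂ = 0 := rfl
@[simp] theorem wt₃_zero : (0 : N34Lie).wt₃ = 0 := rfl
@[simp] theorem wt₁_add (x y : N34Lie) : (x + y).wt₁ = x.wt₁ + y.wt₁ := rfl
@[simp] theorem wt₂_add (x y : N34Lie) : (x + y).wt₂ = x.wt₂ + y.wt₂ := rfl
@[simp] theorem wt₃_add (x y : N34Lie) : (x + y).wt₃ = x.wt₃ + y.wt₃ := rfl
@[simp] theorem wt₁_neg (x : N34Lie) : (-x).wt₁ = -x.wt₁ := rfl
@[simp] theorem wt₂_neg (x : N34Lie) : (-x).wt₂ = -x.wt₂ := rfl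
@[simp] theorem wt₃_neg (x : N34Lie) : (-x).wt₃ = -x.wt₃ := rfl
@[simp] theorem wt₁_smul (c : ℚ) (x : N34Lie) : (c • x).wt₁ = c • x.wt₁ := rfl
@[simp] theorem wt₂_smul (c : ℚ) (x : N34Lie) : (c • x).wt₂ = c • x.wt₂ := rfl
@[simp] theorem wt₃_smul (c : ℚ) (x : N34Lie) : (c • x).wt₃ = c • x.wt₃ := rfl

/-- The `2 × 2` minor in columns `i, j` of the weight-one coordinates of `x` and `y`. -/
def minor (x y : N34Lie) (i j : Fin 4) : ℚ := x.wt₁ i * y.wt₁ j - x.wt₁ j * y.wt₁ i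

/-- The coefficient with which the bracket of the `i`-th weight-two generator and the `j`-th
weight-one generator enters `⁅x, y⁆`. -/
def mixed (x y : N34Lie) (i j : Fin 4) : ℚ := x.wt₂ i * y.wt₁ j - y.wt₂ i * x.wt₁ j

instance : Bracket N34Lie N34Lie where
  bracket x y :=
    let m := minor x y
    let k := mixed x y
    { wt₁ := 0
      wt₂ := ![m 0 2, m 0 3, m 1 2, m 1 3]
      wt₃ := ![m 0 1 + k 0 2 + k 2 3 + k 3 2, m 2 3 - k 0 0 - k 3 1, k 0 1 + k 2 0 + k 3 3,
        k 2 2 - k 1 0, k 0 3 + k 1 1 + k 1 2 + k 3 0] }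

theorem wt₁_lie (x y : N34Lie) : ⁅x, y⁆.wt₁ = 0 := rfl

theorem wt₂_lie (x y : N34Lie) : ⁅x, y⁆.wt₂ =
    ![minor x y 0 2, minor x y 0 3, minor x y 1 2, minor x y 1 3] := rfl

theorem wt₃_lie (x y : N34Lie) : ⁅x, y⁆.wt₃ =
    ![minor x y 0 1 + mixed x y 0 2 + mixed x y 2 3 + mixed x y 3 2,
      minor x y 2 3 - mixed x y 0 0 - mixed x y 3 1,
      mixed x y 0 1 + mixed x y 2 0 + mixed x y 3 3,
      mixed x y 2 2 - mixed x y 1 0,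
      mixed x y 0 3 + mixed x y 1 1 + mixed x y 1 2 + mixed x y 3 0] := rfl

noncomputable instance : LieRing N34Lie where
  add_lie x y z := by
    ext i <;> fin_cases i <;> simp [wt₁_lie, wt₂_lie, wt₃_lie, minor, mixed] <;> ring
  lie_add x y z := by
    ext i <;> fin_cases i <;> simp [wt₁_lie, wt₂_lie, wt₃_lie, minor, mixed] <;> ring
  lie_self x := by
    ext i <;> fin_cases i <;> simp [wt₁_lie, wt₂_lie, wt₃_lie, minor, mixed, mul_comm]
  leibniz_lie x y z := by
    ext i <;> fin_cases i <;> simp [wt₁_lie, wt₂_lie, wt₃_lie, minor, mixed] <;> ring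

noncomputable instance : LieAlgebra ℚ N34Lie where
  lie_smul c x y := by
    ext i <;> fin_cases i <;> simp [wt₁_lie, wt₂_lie, wt₃_lie, minor, mixed] <;> ring

instance : ThreeStepLie N34Lie where
  lie_lie_lie_right w x y z := by
    ext i <;> fin_cases i <;> simp [wt₁_lie, wt₂_lie, wt₃_lie, minor, mixed]

/-- The generators `A, B, C, D`. -/
def e (i : Fin 4) : N34Lie := ⟨Pi.single i 1, 0, 0⟩

theorem wt₃_lie_lie (x y z : N34Lie) : ⁅⁅x, y⁆, z⁆.wt₃ =
    ![minor x y 0 2 * z.wt₁ 2 + minor x y 1 2 * z.wt₁ 3 + minor x y 1 3 * z.wt₁ 2,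
      -(minor x y 0 2 * z.wt₁ 0) - minor x y 1 3 * z.wt₁ 1,
      minor x y 0 2 * z.wt₁ 1 + minor x y 1 2 * z.wt₁ 0 + minor x y 1 3 * z.wt₁ 3,
      minor x y 1 2 * z.wt₁ 2 - minor x y 0 3 * z.wt₁ 0,
      minor x y 0 2 * z.wt₁ 3 + minor x y 0 3 * z.wt₁ 1 + minor x y 0 3 * z.wt₁ 2 +
        minor x y 1 3 * z.wt₁ 0] := by
  ext i
  fin_cases i <;> simp [wt₃_lie, wt₁_lie, wt₂_lie, mixed, minor, -lie_lie]

theorem wt₂_lie_lie (x y z : N34Lie) : ⁅⁅x, y⁆, z⁆.wt₂ = 0 := by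
  simp [wt₂_lie, minor, wt₁_lie, -lie_lie]

theorem wt₃_lie_lie_right (x y z : N34Lie) : ⁅z, ⁅x, y⁆⁆.wt₃ = -⁅⁅x, y⁆, z⁆.wt₃ := by
  rw [← lie_skew, wt₃_neg]

theorem e_relations : N34LieRelations (e 0) (e 1) (e 2) (e 3) := by
  have lie_ab : ⁅e 0, e 1⁆ = ⟨0, 0, ![1, 0, 0, 0, 0]⟩ := by
    ext i <;> fin_cases i <;> simp [wt₁_lie, wt₂_lie, wt₃_lie, minor, mixed, e]
  have lie_cd : ⁅e 2, e 3⁆ = ⟨0, 0, ![0, 1, 0, 0, 0]⟩ := by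
    ext i <;> fin_cases i <;> simp [wt₁_lie, wt₂_lie, wt₃_lie, minor, mixed, e]
  constructor
  case ab =>
    rw [lie_ab]
    simp [N34Lie.ext_iff, wt₁_lie, wt₂_lie_lie, wt₃_lie_lie, minor, e, -lie_lie]
  case cd =>
    rw [lie_cd, ← lie_skew]
    simp [N34Lie.ext_iff, wt₁_lie, wt₂_lie_lie, wt₃_lie_lie, minor, e, -lie_lie, -lie_skew]
  all_goals
    simp only [N34Lie.ext_iff, ← lie_skew (e _) ⁅e _, e _⁆, wt₁_lie, wt₂_lie_lie, wt₃_lie_lie,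
      wt₁_neg, wt₂_neg, wt₃_neg, wt₁_zero, wt₂_zero, wt₃_zero, neg_zero, true_and]
    simp [minor, e]

/-! ### Rigidity of the defining relations -/

section Rigidity

variable {a b c d x y z : N34Lie}

theorem minor_swap (x y : N34Lie) (i j : Fin 4) : minor x y j i = -minor x y i j := by
  unfold minor
  ring

theorem wt₂_lie_eq_zero : ⁅x, y⁆.wt₂ = 0 ↔ minor x y 0 2 = 0 ∧ minor x y 0 3 = 0 ∧
    minor x y 1 2 = 0 ∧ minor x y 1 3 = 0 := by
  simp [wt₂_lie]

theorem wt₁_eq_zero_of_minor_eq_zero {i j k : Fin 4} (hij : minor x y i j ≠ 0)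
    (hik : minor x y i k = 0) (hjk : minor x y j k = 0) : x.wt₁ k = 0 ∧ y.wt₁ k = 0 := by
  unfold minor at *
  constructor
  · refine (mul_eq_zero_iff_left hij).1 ?_
    linear_combination x.wt₁ j * hik - x.wt₁ i * hjk
  · refine (mul_eq_zero_iff_left hij).1 ?_
    linear_combination y.wt₁ j * hik - y.wt₁ i * hjk

theorem det_wt₁_eq_sum_minor_mul_minor (a b c d : N34Lie) :
    (Matrix.of ![a.wt₁, b.wt₁, c.wt₁, d.wt₁]).det =
      minor a b 0 1 * minor c d 2 3 - minor a b 0 2 * minor c d 1 3 +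
        minor a b 0 3 * minor c d 1 2 + minor a b 1 2 * minor c d 0 3 -
        minor a b 1 3 * minor c d 0 2 + minor a b 2 3 * minor c d 0 1 := by
  simp [minor, Matrix.det_succ_row_zero, Fin.sum_univ_succ, Fin.succAbove]
  ring

theorem det_wt₁_of_wt₂_lie_eq_zero (hab : ⁅a, b⁆.wt₂ = 0) :
    (Matrix.of ![a.wt₁, b.wt₁, c.wt₁, d.wt₁]).det =
      minor a b 0 1 * minor c d 2 3 + minor a b 2 3 * minor c d 0 1 := by
  obtain ⟨h₀₂, h₀₃, h₁₂, h₁₃⟩ := wt₂_lie_eq_zero.1 hab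
  rw [det_wt₁_eq_sum_minor_mul_minor, h₀₂, h₀₃, h₁₂, h₁₃]
  ring

theorem wt₁_eq_of_minor_zero_one_ne_zero (hxy : ⁅x, y⁆.wt₂ = 0) (h : minor x y 0 1 ≠ 0) :
    x.wt₁ = ![x.wt₁ 0, x.wt₁ 1, 0, 0] ∧ y.wt₁ = ![y.wt₁ 0, y.wt₁ 1, 0, 0] := by
  obtain ⟨h₀₂, h₀₃, h₁₂, h₁₃⟩ := wt₂_lie_eq_zero.1 hxy
  obtain ⟨hx₂, hy₂⟩ := wt₁_eq_zero_of_minor_eq_zero h h₀₂ h₁₂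
  obtain ⟨hx₃, hy₃⟩ := wt₁_eq_zero_of_minor_eq_zero h h₀₃ h₁₃
  constructor <;> ext i <;> fin_cases i <;> simp [*]

theorem wt₁_eq_of_minor_two_three_ne_zero (hxy : ⁅x, y⁆.wt₂ = 0) (h : minor x y 2 3 ≠ 0) :
    x.wt₁ = ![0, 0, x.wt₁ 2, x.wt₁ 3] ∧ y.wt₁ = ![0, 0, y.wt₁ 2, y.wt₁ 3] := by
  obtain ⟨h₀₂, h₀₃, h₁₂, h₁₃⟩ := wt₂_lie_eq_zero.1 hxy
  rw [← neg_eq_zero, ← minor_swap] at h₀₂ h₀₃ h₁₂ h₁₃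
  obtain ⟨hx₀, hy₀⟩ := wt₁_eq_zero_of_minor_eq_zero h h₀₂ h₀₃
  obtain ⟨hx₁, hy₁⟩ := wt₁_eq_zero_of_minor_eq_zero h h₁₂ h₁₃
  constructor <;> ext i <;> fin_cases i <;> simp [*]

theorem wt₂_lie_ab (h : N34LieRelations a b c d) : ⁅a, b⁆.wt₂ = 0 := by
  rw [h.ab, wt₂_lie_eq_zero]
  simp [minor, wt₁_lie, -lie_lie]

theorem wt₂_lie_cd (h : N34LieRelations a b c d) : ⁅c, d⁆.wt₂ = 0 := by
  rw [h.cd, wt₂_lie_eq_zero]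
  simp [minor, wt₁_lie, -lie_lie]

section TripleBracket

variable {p q s t : ℚ}

theorem coord_mul_eq_zero_of_lie_lie_right (hx : x.wt₁ = ![p, q, 0, 0])
    (hy : y.wt₁ = ![0, 0, s, t]) (h : ⁅⁅x, y⁆, y⁆ = 0) : p * s = 0 ∧ q * s = 0 ∧ q * t = 0 := by
  have h := congrArg wt₃ h
  simp only [wt₃_lie_lie, minor, hx, hy, wt₃_zero, Matrix.cons_val] at h
  have hU := congrFun h 0
  have hP := congrFun h 2
  have hQ := congrFun h 3
  simp only [Matrix.cons_val, Pi.zero_apply] at hU hP hQ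
  have hqs : q * s = 0 := (pow_eq_zero_iff two_ne_zero).1 (by linear_combination q * hQ)
  have hqt : q * t = 0 := (pow_eq_zero_iff two_ne_zero).1 (by linear_combination q * hP)
  refine ⟨(pow_eq_zero_iff two_ne_zero).1 ?_, hqs, hqt⟩
  linear_combination p * hU - 2 * p * t * hqs

theorem coord_mul_eq_zero_of_lie_left_lie (hx : x.wt₁ = ![p, q, 0, 0])
    (hy : y.wt₁ = ![0, 0, s, t]) (h : ⁅x, ⁅x, y⁆⁆ = 0) : p * s = 0 ∧ p * t = 0 ∧ q * t = 0 := by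
  have h := congrArg wt₃ h
  simp only [wt₃_lie_lie_right, wt₃_lie_lie, minor, hx, hy, wt₃_zero, Matrix.cons_val,
    neg_eq_zero] at h
  have hV := congrFun h 1
  have hQ := congrFun h 3
  simp only [Matrix.cons_val, Pi.zero_apply] at hV hQ
  have hpt : p * t = 0 := (pow_eq_zero_iff two_ne_zero).1 (by linear_combination -t * hQ)
  have hqt : q * t = 0 := (pow_eq_zero_iff two_ne_zero).1
    (by linear_combination -t * hV - p * s * hpt)
  refine ⟨(pow_eq_zero_iff two_ne_zero).1 ?_, hpt, hqt⟩
  linear_combination -s * hV - q * s * hqt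

theorem coord_mul_eq_zero_of_lie_lie_right_swap (hx : x.wt₁ = ![0, 0, p, q])
    (hy : y.wt₁ = ![s, t, 0, 0]) (h : ⁅⁅x, y⁆, y⁆ = 0) : p * s = 0 ∧ q * s = 0 ∧ q * t = 0 := by
  have h := congrArg wt₃ h
  simp only [wt₃_lie_lie, minor, hx, hy, wt₃_zero, Matrix.cons_val] at h
  have hV := congrFun h 1
  have hQ := congrFun h 3
  simp only [Matrix.cons_val, Pi.zero_apply] at hV hQ
  have hqs : q * s = 0 := (pow_eq_zero_iff two_ne_zero).1 (by linear_combination q * hQ)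
  have hps : p * s = 0 := (pow_eq_zero_iff three_ne_zero).1
    (by linear_combination p ^ 2 * s * hV - p ^ 2 * t ^ 2 * hqs)
  refine ⟨hps, hqs, (pow_eq_zero_iff two_ne_zero).1 ?_⟩
  linear_combination q * hV - s * q * hps

theorem coord_mul_eq_zero_of_lie_left_lie_swap (hx : x.wt₁ = ![0, 0, p, q])
    (hy : y.wt₁ = ![s, t, 0, 0]) (h : ⁅x, ⁅x, y⁆⁆ = 0) : p * s = 0 ∧ p * t = 0 ∧ q * t = 0 := by
  have h := congrArg wt₃ h
  simp only [wt₃_lie_lie_right, wt₃_lie_lie, minor, hx, hy, wt₃_zero, Matrix.cons_val,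
    neg_eq_zero] at h
  have hU := congrFun h 0
  have hP := congrFun h 2
  have hQ := congrFun h 3
  simp only [Matrix.cons_val, Pi.zero_apply] at hU hP hQ
  have hqt : q * t = 0 := (pow_eq_zero_iff two_ne_zero).1 (by linear_combination -t * hP)
  have hpt : p * t = 0 := (pow_eq_zero_iff two_ne_zero).1 (by linear_combination -t * hQ)
  refine ⟨(pow_eq_zero_iff two_ne_zero).1 ?_, hpt, hqt⟩
  linear_combination -s * hU - 2 * p * s * hqt

end TripleBracket

theorem minor_mul_minor_eq_zero (h : N34LieRelations a b c d) :
    minor a b 2 3 * minor c d 0 1 = 0 := by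
  by_contra hne
  obtain ⟨hab, hcd⟩ := mul_ne_zero_iff.1 hne
  obtain ⟨ha, hb⟩ := wt₁_eq_of_minor_two_three_ne_zero (wt₂_lie_ab h) hab
  obtain ⟨hc, hd⟩ := wt₁_eq_of_minor_zero_one_ne_zero (wt₂_lie_cd h) hcd
  obtain ⟨-, -, had⟩ := coord_mul_eq_zero_of_lie_lie_right_swap ha hd h.lie_ad_d
  obtain ⟨hbc₁, hbc₂, hbc₃⟩ := coord_mul_eq_zero_of_lie_left_lie_swap hb hc h.lie_b_bc
  have haac := congrFun (congrArg wt₃ h.aac) 0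
  simp only [wt₃_lie_lie_right, wt₃_lie_lie, minor, Pi.neg_apply, Matrix.cons_val] at haac
  rw [ha, hb, hc, hd] at haac
  simp only [Matrix.cons_val] at haac
  unfold minor at hab hcd
  have hb₂ : b.wt₁ 2 = 0 := by grind
  have hc₁ : c.wt₁ 1 = 0 := by grind
  have ha₃ : a.wt₁ 3 = 0 := by grind
  grind

theorem diagonal_of_minor_ne_zero (h : N34LieRelations a b c d) (hab : minor a b 0 1 ≠ 0)
    (hcd : minor c d 2 3 ≠ 0) : a.wt₁ = ![a.wt₁ 0, 0, 0, 0] ∧ b.wt₁ = ![0, b.wt₁ 1, 0, 0] ∧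
      c.wt₁ = ![0, 0, c.wt₁ 2, 0] ∧ d.wt₁ = ![0, 0, 0, d.wt₁ 3] := by
  obtain ⟨ha, hb⟩ := wt₁_eq_of_minor_zero_one_ne_zero (wt₂_lie_ab h) hab
  obtain ⟨hc, hd⟩ := wt₁_eq_of_minor_two_three_ne_zero (wt₂_lie_cd h) hcd
  obtain ⟨had₁, had₂, had₃⟩ := coord_mul_eq_zero_of_lie_lie_right ha hd h.lie_ad_d
  obtain ⟨hbc₁, -, hbc₃⟩ := coord_mul_eq_zero_of_lie_left_lie hb hc h.lie_b_bc
  unfold minor at hab hcd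
  have ha₁ : a.wt₁ 1 = 0 := by grind
  have hd₂ : d.wt₁ 2 = 0 := by grind
  have hc₃ : c.wt₁ 3 = 0 := by grind
  have hb₀ : b.wt₁ 0 = 0 := by grind
  exact ⟨ha₁ ▸ ha, hb₀ ▸ hb, hc₃ ▸ hc, hd₂ ▸ hd⟩

theorem eq_one_of_diagonal {p q r s : ℚ} (h : N34LieRelations a b c d) (ha : a.wt₁ = ![p, 0, 0, 0])
    (hb : b.wt₁ = ![0, q, 0, 0]) (hc : c.wt₁ = ![0, 0, r, 0]) (hd : d.wt₁ = ![0, 0, 0, s])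
    (hpqrs : p * q * (r * s) ≠ 0) : p = 1 ∧ q = 1 ∧ r = 1 ∧ s = 1 := by
  have hab : p * q = p * r * r := by
    simpa [wt₁_lie, wt₂_lie, wt₃_lie, minor, mixed, ha, hb, hc, -lie_lie] using
      congrFun (congrArg wt₃ h.ab) 0
  have hadb : p * s * q = p * s * r := by
    simpa [wt₃_lie_lie, minor, ha, hb, hc, hd, -lie_lie] using congrFun (congrArg wt₃ h.adb) 4
  have haad : p * s * p = q * r * r := by
    simpa [wt₃_lie_lie, wt₃_lie_lie_right, minor, ha, hb, hc, hd, -lie_lie] using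
      congrFun (congrArg wt₃ h.aad) 3
  have haac : p * r * p = q * s * q := by
    simpa [wt₃_lie_lie, wt₃_lie_lie_right, minor, ha, hb, hc, hd, -lie_lie] using
      congrFun (congrArg wt₃ h.aac) 1
  have hacb : p * r * q = q * s * s := by
    simpa [wt₃_lie_lie, minor, ha, hb, hc, hd, -lie_lie] using congrFun (congrArg wt₃ h.acb) 2
  obtain ⟨⟨hp, hq⟩, hr, hs⟩ : (p ≠ 0 ∧ q ≠ 0) ∧ r ≠ 0 ∧ s ≠ 0 := by
    simpa only [ne_eq, mul_eq_zero, not_or] using hpqrs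
  obtain rfl : q = r := mul_left_cancel₀ (mul_ne_zero hp hs) hadb
  obtain rfl : q = 1 := mul_left_cancel₀ (mul_ne_zero hp hq) (by linear_combination -hab)
  have hsp : s = p ^ 2 := by linear_combination -haac
  have hps : p = 1 := by linear_combination hacb + s * hsp + haad
  exact ⟨hps, rfl, rfl, by rw [hsp, hps, one_pow]⟩

theorem wt₁_eq_of_det_ne_zero (h : N34LieRelations a b c d)
    (hdet : (Matrix.of ![a.wt₁, b.wt₁, c.wt₁, d.wt₁]).det ≠ 0) :
    a.wt₁ = (e 0).wt₁ ∧ b.wt₁ = (e 1).wt₁ ∧ c.wt₁ = (e 2).wt₁ ∧ d.wt₁ = (e 3).wt₁ := by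
  rw [det_wt₁_of_wt₂_lie_eq_zero (wt₂_lie_ab h), minor_mul_minor_eq_zero h, add_zero] at hdet
  obtain ⟨hab, hcd⟩ := mul_ne_zero_iff.1 hdet
  obtain ⟨ha, hb, hc, hd⟩ := diagonal_of_minor_ne_zero h hab hcd
  obtain ⟨ha₀, hb₁, hc₂, hd₃⟩ := eq_one_of_diagonal h ha hb hc hd (by
    unfold minor at hdet
    rw [ha, hb, hc, hd] at hdet
    simpa using hdet)
  rw [ha, hb, hc, hd, ha₀, hb₁, hc₂, hd₃]
  refine ⟨?_, ?_, ?_, ?_⟩ <;> ext i <;> fin_cases i <;> rfl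

theorem lie_lie_congr {x' y' z' : N34Lie} (hx : x.wt₁ = x'.wt₁) (hy : y.wt₁ = y'.wt₁)
    (hz : z.wt₁ = z'.wt₁) : ⁅⁅x, y⁆, z⁆ = ⁅⁅x', y'⁆, z'⁆ := by
  have hm : minor x y = minor x' y' := by
    unfold minor
    rw [hx, hy]
  ext1
  · rfl
  · rw [wt₂_lie_lie, wt₂_lie_lie]
  · rw [wt₃_lie_lie, wt₃_lie_lie, hm, hz]

theorem eq_sum_lie_lie (hx₁ : x.wt₁ = 0) (hx₂ : x.wt₂ = 0) : x =
    x.wt₃ 0 • ⁅⁅e 0, e 2⁆, e 2⁆ - x.wt₃ 1 • ⁅⁅e 0, e 2⁆, e 0⁆ + x.wt₃ 2 • ⁅⁅e 0, e 2⁆, e 1⁆ +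
      x.wt₃ 3 • ⁅⁅e 1, e 2⁆, e 2⁆ + x.wt₃ 4 • ⁅⁅e 0, e 2⁆, e 3⁆ := by
  rw [sub_eq_add_neg]
  ext i <;> fin_cases i <;>
    simp [wt₁_lie, wt₂_lie, wt₃_lie_lie, minor, hx₁, hx₂, e, -lie_lie]

theorem map_eq_self_of_wt₁_eq (θ : N34Lie →ₗ⁅ℚ⁆ N34Lie) (hθ : ∀ i, (θ (e i)).wt₁ = (e i).wt₁)
    (hx₁ : x.wt₁ = 0) (hx₂ : x.wt₂ = 0) : θ x = x := by
  have fixed (i j k : Fin 4) : θ ⁅⁅e i, e j⁆, e k⁆ = ⁅⁅e i, e j⁆, e k⁆ := by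
    rw [LieHom.map_lie, LieHom.map_lie]
    exact lie_lie_congr (hθ i) (hθ j) (hθ k)
  rw [eq_sum_lie_lie hx₁ hx₂]
  simp only [map_add, map_sub, map_smul, fixed]

theorem map_eq_self_of_det_ne_zero (θ : N34Lie →ₗ⁅ℚ⁆ N34Lie)
    (hθ : (Matrix.of fun i => (θ (e i)).wt₁).det ≠ 0) (hx₁ : x.wt₁ = 0) (hx₂ : x.wt₂ = 0) :
    θ x = x := by
  have hrows : (fun i => (θ (e i)).wt₁) =
      ![(θ (e 0)).wt₁, (θ (e 1)).wt₁, (θ (e 2)).wt₁, (θ (e 3)).wt₁] := by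
    ext1 i
    fin_cases i <;> rfl
  obtain ⟨h₀, h₁, h₂, h₃⟩ := wt₁_eq_of_det_ne_zero (e_relations.map θ) (hrows ▸ hθ)
  refine map_eq_self_of_wt₁_eq θ (fun i => ?_) hx₁ hx₂
  fin_cases i <;> assumption

end Rigidity

theorem mem_of_forall_e_mem {S : LieSubalgebra ℚ N34Lie} (he : ∀ i, e i ∈ S) (x : N34Lie) :
    x ∈ S := by
  have central_mem {z : N34Lie} (hz₁ : z.wt₁ = 0) (hz₂ : z.wt₂ = 0) : z ∈ S := by
    have lie_mem (i j k : Fin 4) (c : ℚ) : c • ⁅⁅e i, e j⁆, e k⁆ ∈ S :=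
      S.smul_mem c (S.lie_mem (S.lie_mem (he i) (he j)) (he k))
    rw [eq_sum_lie_lie hz₁ hz₂]
    exact add_mem (add_mem (add_mem (sub_mem (lie_mem ..) (lie_mem ..)) (lie_mem ..))
      (lie_mem ..)) (lie_mem ..)
  let y := x.wt₁ 0 • e 0 + x.wt₁ 1 • e 1 + x.wt₁ 2 • e 2 + x.wt₁ 3 • e 3 +
    (x.wt₂ 0 • ⁅e 0, e 2⁆ + x.wt₂ 1 • ⁅e 0, e 3⁆ + x.wt₂ 2 • ⁅e 1, e 2⁆ + x.wt₂ 3 • ⁅e 1, e 3⁆)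
  have hy : y ∈ S := by
    have e_mem (i : Fin 4) (c : ℚ) : c • e i ∈ S := S.smul_mem c (he i)
    have lie_mem (i j : Fin 4) (c : ℚ) : c • ⁅e i, e j⁆ ∈ S :=
      S.smul_mem c (S.lie_mem (he i) (he j))
    exact add_mem (add_mem (add_mem (add_mem (e_mem ..) (e_mem ..)) (e_mem ..)) (e_mem ..))
      (add_mem (add_mem (add_mem (lie_mem ..) (lie_mem ..)) (lie_mem ..)) (lie_mem ..))
  rw [← add_sub_cancel y x]
  refine add_mem hy (central_mem ?_ ?_) <;> ext i <;> fin_cases i <;>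
    simp [y, sub_eq_add_neg, e, wt₁_lie, wt₂_lie, minor]

theorem wt_eq_zero_of_lie_e_eq_zero {x : N34Lie} (h : ∀ i, ⁅x, e i⁆ = 0) :
    x.wt₁ = 0 ∧ x.wt₂ = 0 := by
  have h₁ : x.wt₁ = 0 := by
    have ha := congrArg wt₂ (h 0)
    have hc := congrArg wt₂ (h 2)
    simp only [wt₂_lie, minor, wt₂_zero] at ha hc
    ext i
    fin_cases i
    · simpa [e] using congrFun hc 0
    · simpa [e] using congrFun hc 2
    · simpa [e] using congrFun ha 0
    · simpa [e] using congrFun ha 1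
  have ha := congrArg wt₃ (h 0)
  simp only [wt₃_lie, minor, mixed, h₁, wt₃_zero] at ha
  refine ⟨h₁, ?_⟩
  ext i
  fin_cases i
  · simpa [e] using congrFun ha 1
  · simpa [e] using congrFun ha 3
  · simpa [e] using congrFun ha 2
  · simpa [e] using congrFun ha 4

end N34Lie

namespace N34

theorem closure_generators_eq_top : Subgroup.closure {ga, gb, gc, gd} = (⊤ : Subgroup N34) := by
  rw [eq_top_iff, ← PresentedGroup.closure_range_of N34Rels, Subgroup.closure_le]
  rintro _ ⟨i, rfl⟩
  fin_cases i <;> apply Subgroup.subset_closure <;> simp [ga, gb, gc, gd]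

/-- `x = [a, c]` -/
def gx : N34 := cmt ga gc
/-- `y = [a, d]` -/
def gy : N34 := cmt ga gd
/-- `z = [b, c]` -/
def gz : N34 := cmt gb gc
/-- `w = [b, d]` -/
def gw : N34 := cmt gb gd
/-- `u = [a, b]` -/
def gu : N34 := cmt ga gb
/-- `v = [c, d]` -/
def gv : N34 := cmt gc gd
/-- `p = [x, b]` -/
def gp : N34 := cmt gx gb
/-- `q = [a, y]` -/
def gq : N34 := cmt ga gy
/-- `r = [y, b]` -/
def gr : N34 := cmt gy gb

/-- The relations of `N_{3,4}`, as conditions on a quadruple in an arbitrary group. -/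
structure Relations {G : Type*} [Group G] (a b c d : G) : Prop where
  commute_a_ab : Commute a (cmt a b)
  commute_ab_b : Commute (cmt a b) b
  commute_a_cd : Commute a (cmt c d)
  commute_ad_d : Commute (cmt a d) d
  commute_b_bc : Commute b (cmt b c)
  commute_b_cd : Commute b (cmt c d)
  commute_c_cd : Commute c (cmt c d)
  commute_cd_d : Commute (cmt c d) d
  abc_mul : cmt a (cmt b c) * cmt (cmt a c) b = 1
  abd_mul : cmt a (cmt b d) * cmt (cmt a d) b = 1
  aad : cmt a (cmt a d) = cmt (cmt b c) c
  aac : cmt a (cmt a c) = cmt b (cmt b d)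
  acb : cmt (cmt a c) b = cmt (cmt b d) d
  acc : cmt (cmt a c) c = cmt (cmt b d) c
  adb : cmt (cmt a d) b = cmt (cmt a d) c
  ab : cmt a b = cmt (cmt a c) c
  cd : cmt c d = cmt a (cmt a c)

theorem lift_eq_one_iff_relations {G : Type*} [Group G] (s : Fin 4 → G) :
    (∀ t ∈ N34Rels, FreeGroup.lift s t = 1) ↔ Relations (s 0) (s 1) (s 2) (s 3) := by
  simp only [N34Rels, Set.mem_insert_iff, Set.mem_singleton_iff, forall_eq_or_imp, forall_eq,
    map_cmt, map_mul, map_inv, mul_inv_eq_one, FreeGroup.lift_apply_of, cmt_eq_one_iff]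
  exact ⟨fun ⟨h₁, h₂, h₃, h₄, h₅, h₆, h₇, h₈, h₉, h₁₀, h₁₁, h₁₂, h₁₃, h₁₄, h₁₅, h₁₆, h₁₇⟩ =>
      ⟨h₁, h₂, h₃, h₄, h₅, h₆, h₇, h₈, h₉, h₁₀, h₁₁, h₁₂, h₁₃, h₁₄, h₁₅, h₁₆, h₁₇⟩,
    fun ⟨h₁, h₂, h₃, h₄, h₅, h₆, h₇, h₈, h₉, h₁₀, h₁₁, h₁₂, h₁₃, h₁₄, h₁₅, h₁₆, h₁₇⟩ =>
      ⟨h₁, h₂, h₃, h₄, h₅, h₆, h₇, h₈, h₉, h₁₀, h₁₁, h₁₂, h₁₃, h₁₄, h₁₅, h₁₆, h₁₇⟩⟩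

theorem relations_generators : Relations ga gb gc gd := by
  refine (lift_eq_one_iff_relations PresentedGroup.of).1 fun t ht => ?_
  rw [← PresentedGroup.one_of_mem ht]
  exact DFunLike.congr_fun (FreeGroup.lift.apply_symm_apply (PresentedGroup.mk N34Rels)) t

theorem mem_center_of_commute {g : N34} (ha : Commute ga g) (hb : Commute gb g)
    (hc : Commute gc g) (hd : Commute gd g) : g ∈ Subgroup.center N34 := by
  rw [Subgroup.center_eq_iInf closure_generators_eq_top]
  simpa [Subgroup.mem_centralizer_singleton_iff] using
    ⟨ha.symm.eq, hb.symm.eq, hc.symm.eq, hd.symm.eq⟩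

theorem gv_mem_center : gv ∈ Subgroup.center N34 :=
  mem_center_of_commute relations_generators.commute_a_cd relations_generators.commute_b_cd
    relations_generators.commute_c_cd relations_generators.commute_cd_d.symm

theorem commute_v (g : N34) : Commute g gv := Subgroup.mem_center_iff.1 gv_mem_center g

theorem commute_v_inv (g : N34) : Commute g gv⁻¹ := (commute_v g).inv_right

theorem commute_a_u : Commute ga gu := relations_generators.commute_a_ab

theorem commute_b_u : Commute gb gu := relations_generators.commute_ab_b.symm

theorem cmt_x_a : cmt gx ga = gv⁻¹ :=
  (cmt_inv ga gx).symm.trans (congrArg (·⁻¹) relations_generators.cd.symm)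

theorem cmt_x_b : cmt gx gb = gp := rfl

theorem cmt_x_c : cmt gx gc = gu := relations_generators.ab.symm

theorem cmt_y_a : cmt gy ga = gq⁻¹ := (cmt_inv ga gy).symm

theorem cmt_y_b : cmt gy gb = gr := rfl

theorem cmt_y_c : cmt gy gc = gr := relations_generators.adb.symm

theorem cmt_y_d : cmt gy gd = 1 := cmt_eq_one_iff.2 relations_generators.commute_ad_d

theorem cmt_z_a : cmt gz ga = gp :=
  (cmt_inv ga gz).symm.trans (inv_eq_of_mul_eq_one_right relations_generators.abc_mul)

theorem cmt_z_b : cmt gz gb = 1 := cmt_eq_one_iff.2 relations_generators.commute_b_bc.symm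

theorem cmt_z_c : cmt gz gc = gq := relations_generators.aad.symm

theorem cmt_w_a : cmt gw ga = gr :=
  (cmt_inv ga gw).symm.trans (inv_eq_of_mul_eq_one_right relations_generators.abd_mul)

theorem cmt_w_b : cmt gw gb = gv⁻¹ :=
  (cmt_inv gb gw).symm.trans
    (congrArg (·⁻¹) (relations_generators.cd.trans relations_generators.aac).symm)

theorem cmt_w_c : cmt gw gc = gu :=
  (relations_generators.ab.trans relations_generators.acc).symm

theorem cmt_w_d : cmt gw gd = gp := relations_generators.acb.symm

/-! ### Commuting commutators -/

theorem mul_mul_cmt_x_d : gy * gx * cmt gx gd = gx * gy * gr := by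
  have h := mul_mul_cmt_eq_of_commute (k := gv) (s := gx) (t := gy) rfl rfl rfl
    (commute_v ga).symm (commute_v gx).symm (commute_v gy).symm
  rw [cmt_y_c, (commute_v _).symm.eq, ← mul_assoc, ← mul_assoc] at h
  exact mul_right_cancel h

theorem commute_d_r : Commute gd gr :=
  commute_left_of_commute rfl cmt_y_c cmt_y_d (commute_v _).symm (commute_v _).symm
    (commute_v _).symm (.one_right _) (.one_right _)

theorem commute_w_y_mul_r : Commute gw (gy * gr) := by
  have h := commute_mul_mul_of_commute rfl cmt_y_b cmt_y_d commute_d_r (.one_right _)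
    (.one_right _)
  rwa [mul_one] at h

theorem commute_w_y : Commute gw gy := by
  rw [← commute_mul_cmt_iff gw gy gb, cmt_w_b, cmt_y_b]
  exact commute_w_y_mul_r.mul_left (commute_v_inv _).symm

theorem commute_w_r : Commute gw gr :=
  (commute_mul_iff_right commute_w_y).1 commute_w_y_mul_r

theorem commute_x_u : Commute gx gu := by
  have h := commute_mul_mul_of_commute rfl cmt_x_a cmt_x_c (commute_v_inv _) commute_a_u
    (commute_v_inv _).symm
  exact (commute_mul_iff_right ((Commute.refl _).mul_right (commute_v_inv _))).1 h

theorem commute_z_w_mul_u : Commute gz (gw * gu) := by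
  have h := commute_mul_mul_of_commute rfl cmt_w_b cmt_w_c (commute_v_inv _) commute_b_u
    (commute_v_inv _).symm
  rw [mul_assoc, (commute_v_inv gu).symm.eq, ← mul_assoc] at h
  exact (commute_mul_iff_left (commute_v_inv _)).1 h

theorem mul_cmt_z_d : gz * cmt gz gd = gu * gz := by
  have h := mul_mul_cmt_eq_of_commute (k := gv) (s := gz) (t := gw) rfl rfl rfl
    (commute_v gb).symm (commute_v gz).symm (commute_v gw).symm
  rw [cmt_w_c, (commute_v _).symm.eq, ← mul_assoc, ← mul_assoc, mul_assoc gz,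
    commute_z_w_mul_u.eq, mul_left_inj, mul_assoc, mul_assoc, mul_right_inj] at h
  exact h

theorem commute_w_u_mul_z : Commute gw (gu * gz) := by
  have commute_b_z : Commute gb gz := relations_generators.commute_b_bc
  have hb : Commute gb (cmt gz gd) := by
    rw [eq_inv_mul_of_mul_eq mul_cmt_z_d]
    exact commute_b_z.inv_right.mul_right (commute_b_u.mul_right commute_b_z)
  have h := commute_mul_mul_of_commute rfl cmt_z_b rfl (.one_right _) hb (.one_left _)
  rwa [mul_one, mul_cmt_z_d] at h

theorem commute_y_p : Commute gy gp := by
  rw [← cmt_w_d]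
  exact commute_cmt commute_w_y.symm relations_generators.commute_ad_d

theorem commute_r_p : Commute gr gp := by
  rw [← cmt_w_d]
  exact commute_cmt commute_w_r.symm commute_d_r.symm

theorem commute_u_p : Commute gu gp :=
  commute_cmt commute_x_u.symm commute_b_u.symm

theorem commute_a_p : Commute ga gp :=
  commute_right_of_commute rfl cmt_x_a cmt_x_b commute_x_u.symm (commute_v_inv _) commute_u_p
    (commute_v_inv _).symm (commute_v_inv _)

theorem commute_y_r : Commute gy gr := by
  have h := commute_mul_mul_of_commute rfl cmt_w_a cmt_w_d commute_d_r commute_a_p commute_r_p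
  exact (commute_mul_iff_right commute_w_y.symm).1 ((commute_mul_iff_left commute_y_p).1 h)

theorem commute_d_u : Commute gd gu := by
  have hyb : cmt gy⁻¹ gb = gr⁻¹ := cmt_inv_left commute_y_r
  have hwa : cmt gw⁻¹ ga = gr⁻¹ := by
    rw [cmt_inv_left (cmt_w_a ▸ commute_w_r), cmt_w_a]
  refine (commute_of_mul_cmt_eq rfl (cmt_inv ga gd).symm (cmt_inv gb gd).symm
    commute_a_u.symm commute_b_u.symm ?_).symm
  change gw⁻¹ * gy⁻¹ * cmt gy⁻¹ gb = gy⁻¹ * gw⁻¹ * cmt gw⁻¹ ga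
  rw [hyb, hwa, commute_w_y.inv_inv.eq]

theorem commute_u_y : Commute gu gy := commute_cmt commute_a_u.symm commute_d_u.symm

theorem commute_u_w : Commute gu gw := commute_cmt commute_b_u.symm commute_d_u.symm

theorem commute_u_r : Commute gu gr := commute_cmt commute_u_y commute_b_u.symm

theorem commute_u_q : Commute gu gq := commute_cmt commute_a_u.symm commute_u_y

theorem commute_b_r : Commute gb gr :=
  commute_left_of_commute rfl cmt_w_a cmt_w_b commute_u_w commute_u_r (commute_v_inv _)
    (commute_v_inv _) (commute_v_inv _)

theorem commute_c_p : Commute gc gp :=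
  commute_right_of_commute rfl cmt_w_c cmt_w_d (commute_v _).symm (commute_v _).symm
    (commute_v _).symm commute_u_p commute_d_u

theorem commute_w_z : Commute gw gz := (commute_mul_iff_right commute_u_w.symm).1 commute_w_u_mul_z

theorem commute_z_u : Commute gz gu :=
  (commute_mul_iff_right commute_w_z.symm).1 commute_z_w_mul_u

theorem cmt_z_d : cmt gz gd = gu := by
  rw [eq_inv_mul_of_mul_eq mul_cmt_z_d, ← commute_z_u.eq, inv_mul_cancel_left]

theorem commute_b_p : Commute gb gp :=
  commute_left_of_commute rfl cmt_z_a cmt_z_b commute_z_u.symm commute_u_p (.one_right _)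
    (.one_right _) (.one_right _)

theorem commute_x_p : Commute gx gp :=
  (commute_cmt commute_a_p.symm commute_c_p.symm).symm

theorem commute_z_p : Commute gz gp := (commute_cmt commute_b_p.symm commute_c_p.symm).symm

theorem commute_p_q : Commute gp gq := commute_cmt commute_a_p.symm commute_y_p.symm

theorem commute_w_p : Commute gw gp := by
  have h := commute_mul_mul_of_commute rfl cmt_w_b cmt_w_d (commute_v_inv _) commute_b_p
    (commute_v_inv _).symm
  exact (commute_mul_iff_right ((Commute.refl _).mul_right (commute_v_inv _))).1 h

theorem commute_z_r : Commute gz gr :=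
  commute_of_commute_cmt cmt_z_a cmt_w_a commute_w_z.symm commute_w_p.symm commute_r_p.symm

theorem cmt_y_z_mul_p_mul : cmt gy gz * (gp * cmt gp gd) = gp := by
  have h := cmt_mul_conj_eq (k := gy) rfl cmt_z_a cmt_z_d
  rw [cmt_eq_one_iff.2 commute_a_u.symm, mul_one] at h
  simp only [mul_assoc] at h
  rw [commute_u_p.symm.left_comm, commute_z_u.left_comm, commute_z_u.left_comm,
    commute_u_y.symm.left_comm, mul_right_inj, ← commute_y_p.eq, ← mul_assoc, ← mul_assoc gz,
    ← mul_mul_cmt gy gz] at h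
  simpa only [mul_assoc, mul_right_inj] using h

theorem commute_y_cmt_y_z : Commute gy (cmt gy gz) := by
  rw [eq_mul_inv_of_mul_eq cmt_y_z_mul_p_mul]
  exact commute_y_p.mul_right (commute_y_p.mul_right
    (commute_cmt commute_y_p relations_generators.commute_ad_d)).inv_right

theorem commute_r_cmt_y_z : Commute gr (cmt gy gz) :=
  commute_cmt commute_y_r.symm commute_z_r.symm

theorem cmt_r_c : cmt gr gc = cmt gy gz := by
  have h := cmt_mul_conj_eq (k := gz) rfl cmt_y_b cmt_y_c
  rw [cmt_eq_one_iff.2 commute_b_r.symm, mul_one, mul_assoc gy,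
    mul_assoc _ _ gz, ← (commute_z_r.mul_right commute_z_r).eq, ← mul_assoc, ← mul_assoc,
    ← mul_assoc, ← mul_assoc gy, ← mul_mul_cmt gy gz, mul_assoc _ (cmt _ _),
    ← (commute_r_cmt_y_z.mul_left commute_r_cmt_y_z).eq, ← mul_assoc] at h
  exact mul_left_cancel h

theorem commute_c_cmt_x_d : Commute gc (cmt gx gd) :=
  commute_right_of_commute rfl cmt_x_c rfl (commute_v _).symm (commute_v _).symm
    (commute_v _).symm (commute_cmt commute_x_u.symm commute_d_u.symm) commute_d_u

theorem cmt_r_x : cmt gr gx = cmt gy gz := by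
  have hconj := congrArg (MulAut.conj gc⁻¹) mul_mul_cmt_x_d
  simp only [map_mul, MulAut.conj_apply, inv_inv, ← mul_cmt, cmt_x_c, cmt_y_c, cmt_r_c,
    cmt_eq_one_iff.2 commute_c_cmt_x_d.symm, mul_one] at hconj
  have hut : Commute gu (cmt gx gd) := commute_cmt commute_x_u.symm commute_d_u.symm
  have hug : Commute gu (cmt gy gz) := commute_cmt commute_u_y commute_z_u.symm
  have hleft : gy * gr * (gx * gu) * cmt gx gd = gr * gx * gr * gy * gu := by
    rw [← mul_assoc, mul_assoc _ gu, hut.eq, ← mul_assoc, commute_y_r.eq, mul_assoc gr,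
      mul_assoc gr, mul_mul_cmt_x_d, mul_assoc gx, commute_y_r.eq]
    simp only [mul_assoc]
  have hright : gx * gu * (gy * gr) * (gr * cmt gy gz) =
      gx * gr * cmt gy gz * gr * gy * gu := by
    have hu := (commute_u_y.mul_right commute_u_r).mul_right (commute_u_r.mul_right hug)
    have hy := commute_y_r.mul_right (commute_y_r.mul_right commute_y_cmt_y_z)
    rw [mul_assoc, mul_assoc, hu.eq, mul_assoc gy, hy.eq, commute_r_cmt_y_z.eq]
    simp only [mul_assoc]
  rw [hleft, hright, mul_left_inj, mul_left_inj, mul_left_inj, ← mul_mul_cmt gr gx] at hconj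
  exact mul_left_cancel hconj

theorem commute_x_w : Commute gx gw := by
  have h := cmt_mul_conj_eq (k := gx) rfl cmt_w_a cmt_w_c
  have hu : Commute gu (gr * cmt gr gx) :=
    commute_u_r.mul_right (commute_cmt commute_u_r commute_x_u.symm)
  rw [cmt_eq_one_iff.2 commute_a_u.symm, mul_one, cmt_r_c, ← cmt_r_x, mul_assoc, mul_assoc gw,
    hu.eq, mul_assoc _ gu, commute_x_u.symm.eq, mul_assoc gw gr, ← mul_assoc gr,
    ← mul_mul_cmt gr gx] at h
  simp only [← mul_assoc, mul_left_inj] at h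
  exact h

theorem commute_x_r : Commute gx gr :=
  commute_of_commute_cmt cmt_x_a cmt_w_a commute_x_w (commute_v_inv _).symm (commute_v_inv _).symm

theorem commute_y_z : Commute gy gz := by
  rw [← cmt_eq_one_iff, ← cmt_r_x, cmt_eq_one_iff]
  exact commute_x_r.symm

theorem commute_c_r : Commute gc gr := by
  rw [Commute.symm_iff, ← cmt_eq_one_iff, cmt_r_c, cmt_eq_one_iff]
  exact commute_y_z

theorem commute_d_p : Commute gd gp := by
  have h := cmt_y_z_mul_p_mul
  rw [cmt_eq_one_iff.2 commute_y_z, one_mul, mul_eq_left] at h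
  exact (cmt_eq_one_iff.1 h).symm

theorem commute_r_q : Commute gr gq := by
  rw [← cmt_z_c]
  exact commute_cmt commute_z_r.symm commute_c_r.symm

theorem commute_z_q : Commute gz gq :=
  Commute.inv_right_iff.1 (commute_of_commute_cmt cmt_z_a cmt_y_a commute_y_z.symm
    commute_y_p.symm commute_p_q.inv_right)

theorem commute_b_q : Commute gb gq :=
  commute_right_of_commute rfl cmt_z_b cmt_z_c (.refl _) (.one_right _) commute_z_q
    (.one_left _) (.one_right _)

theorem commute_a_r : Commute ga gr :=
  commute_right_of_commute rfl cmt_y_a cmt_y_b commute_u_y commute_u_q.inv_right commute_u_r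
    commute_r_q.symm.inv_left commute_b_q.inv_right

theorem commute_y_q : Commute gy gq :=
  commute_of_commute_cmt cmt_y_c cmt_z_c commute_y_z commute_z_r.symm commute_r_q

theorem commute_d_q : Commute gd gq :=
  Commute.inv_right_iff.1 (commute_left_of_commute rfl cmt_y_a cmt_y_d (.refl _)
    commute_y_q.inv_right (.one_right _) (.one_right _) (.one_right _))

theorem commute_c_u : Commute gc gu :=
  commute_right_of_commute rfl cmt_z_c cmt_z_d (commute_v _).symm (commute_v _).symm
    (commute_v _).symm commute_u_q.symm commute_d_q

theorem commute_x_z : Commute gx gz := by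
  have hxb : cmt gx⁻¹ gb = gp⁻¹ := cmt_inv_left commute_x_p
  have hza : cmt gz⁻¹ ga = gp⁻¹ := by rw [cmt_inv_left (cmt_z_a ▸ commute_z_p), cmt_z_a]
  have h := mul_mul_cmt_eq_of_commute rfl (cmt_inv ga gc).symm (cmt_inv gb gc).symm
    commute_c_u.symm commute_x_u.symm.inv_right commute_z_u.symm.inv_right
  change gz⁻¹ * gx⁻¹ * (gu * cmt gx⁻¹ gb) = gx⁻¹ * gz⁻¹ * (cmt gz⁻¹ ga * gu) at h
  rw [hxb, hza, commute_u_p.inv_right.eq, mul_left_inj] at h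
  exact (Commute.inv_inv_iff.1 h).symm

theorem commute_x_q : Commute gx gq :=
  commute_of_commute_cmt cmt_x_c cmt_z_c commute_x_z commute_z_u.symm commute_u_q

theorem commute_a_q : Commute ga gq :=
  commute_right_of_commute rfl cmt_z_a cmt_z_c commute_x_z commute_x_p commute_x_q commute_p_q
    commute_c_p

theorem commute_x_y : Commute gx gy := by
  have ha : Commute ga (cmt gx gd) := by
    have hconj := congrArg (MulAut.conj ga⁻¹) mul_mul_cmt_x_d
    simp only [map_mul, MulAut.conj_apply, inv_inv, ← mul_cmt, cmt_x_a, cmt_y_a,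
      cmt_eq_one_iff.2 commute_a_r.symm, mul_one] at hconj
    simp only [mul_assoc, (commute_v_inv gx).left_comm, (commute_v_inv gy).left_comm,
      (commute_v_inv gq⁻¹).left_comm, commute_y_q.inv_right.left_comm,
      commute_x_q.inv_right.left_comm, mul_right_inj] at hconj
    rw [← mul_assoc gx gy gr, ← mul_mul_cmt_x_d, mul_assoc, mul_right_inj, mul_right_inj,
      mul_eq_left] at hconj
    exact (cmt_eq_one_iff.1 hconj).symm
  have h := commute_mul_mul_of_commute rfl cmt_x_a rfl (commute_v_inv _) ha (commute_v_inv _).symm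
  have h' : Commute gy (gy * gx * cmt gx gd) := by
    rw [mul_assoc, (commute_v_inv _).symm.eq, ← mul_assoc] at h
    rw [mul_assoc]
    exact (Commute.refl _).mul_right ((commute_mul_iff_left (commute_v_inv _)).1 h)
  rw [mul_mul_cmt_x_d] at h'
  exact ((commute_mul_iff_left (.refl _)).1 ((commute_mul_iff_left commute_y_r).1 h')).symm

theorem cmt_x_d : cmt gx gd = gr := by
  have h := mul_mul_cmt_x_d
  rw [commute_x_y.eq] at h
  exact mul_left_cancel h

theorem commute_c_q : Commute gc gq :=
  Commute.inv_right_iff.1 (commute_left_of_commute rfl cmt_y_a cmt_y_c commute_x_y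
    commute_x_q.inv_right commute_x_r commute_r_q.symm.inv_left commute_a_r)

theorem gu_mem_center : gu ∈ Subgroup.center N34 :=
  mem_center_of_commute commute_a_u commute_b_u commute_c_u commute_d_u

theorem gp_mem_center : gp ∈ Subgroup.center N34 :=
  mem_center_of_commute commute_a_p commute_b_p commute_c_p commute_d_p

theorem gq_mem_center : gq ∈ Subgroup.center N34 :=
  mem_center_of_commute commute_a_q commute_b_q commute_c_q commute_d_q

theorem gr_mem_center : gr ∈ Subgroup.center N34 :=
  mem_center_of_commute commute_a_r commute_b_r commute_c_r commute_d_r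

/-- The commutators `x, y, z, w` and the central commutators `u, v, p, q, r`, which together
generate the derived subgroup. -/
def derivedGen : Fin 4 ⊕ Fin 5 → N34 := Sum.elim ![gx, gy, gz, gw] ![gu, gv, gp, gq, gr]

/-- The subgroup generated by the central commutators `u, v, p, q, r`. -/
def tripleSubgroup : Subgroup N34 := Subgroup.closure (Set.range (derivedGen ∘ Sum.inr))

theorem derivedGen_inr_mem_center (j : Fin 5) : derivedGen (.inr j) ∈ Subgroup.center N34 := by
  fin_cases j
  exacts [gu_mem_center, gv_mem_center, gp_mem_center, gq_mem_center, gr_mem_center]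

theorem tripleSubgroup_le_center : tripleSubgroup ≤ Subgroup.center N34 := by
  rw [tripleSubgroup, Subgroup.closure_le]
  rintro _ ⟨j, rfl⟩
  exact derivedGen_inr_mem_center j

theorem tripleSubgroup_le_closure_derivedGen :
    tripleSubgroup ≤ Subgroup.closure (Set.range derivedGen) :=
  Subgroup.closure_mono (Set.range_comp_subset_range _ _)

theorem cmt_mem_tripleSubgroup {s t : N34} (hs : s ∈ Set.range derivedGen)
    (ht : t ∈ ({ga, gb, gc, gd} : Set N34)) : cmt s t ∈ tripleSubgroup := by
  obtain ⟨i | j, rfl⟩ := hs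
  · have mem (j : Fin 5) : derivedGen (.inr j) ∈ tripleSubgroup := Subgroup.subset_closure ⟨j, rfl⟩
    have hv : gv⁻¹ ∈ tripleSubgroup := inv_mem (mem 1)
    have hq : gq⁻¹ ∈ tripleSubgroup := inv_mem (mem 3)
    rcases ht with rfl | rfl | rfl | rfl <;> fin_cases i
    exacts [cmt_x_a ▸ hv, cmt_y_a ▸ hq, cmt_z_a ▸ mem 2, cmt_w_a ▸ mem 4, mem 2, mem 4,
      cmt_z_b ▸ one_mem _, cmt_w_b ▸ hv, cmt_x_c ▸ mem 0, cmt_y_c ▸ mem 4, cmt_z_c ▸ mem 3,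
      cmt_w_c ▸ mem 0,
      cmt_x_d ▸ mem 4, cmt_y_d ▸ one_mem _, cmt_z_d ▸ mem 0, cmt_w_d ▸ mem 2]
  · rw [cmt_eq_one_iff.2 (Subgroup.mem_center_iff.1 (derivedGen_inr_mem_center j) t).symm]
    exact one_mem _

instance : tripleSubgroup.Normal where
  conj_mem z hz g := by
    rwa [Subgroup.mem_center_iff.1 (tripleSubgroup_le_center hz) g, mul_inv_cancel_right]

instance : (Subgroup.closure (Set.range derivedGen)).Normal := by
  rw [← Subgroup.commutator_top_right_le_iff, ← closure_generators_eq_top]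
  exact (commutator_closure_le fun s hs t ht => cmt_mem_tripleSubgroup hs ht).trans
    tripleSubgroup_le_closure_derivedGen

theorem commutator_le_closure_derivedGen :
    commutator N34 ≤ Subgroup.closure (Set.range derivedGen) := by
  rw [commutator_def, ← closure_generators_eq_top]
  refine commutator_closure_le fun s hs t ht => ?_
  have mem (i : Fin 4 ⊕ Fin 5) : derivedGen i ∈ Subgroup.closure (Set.range derivedGen) :=
    Subgroup.subset_closure ⟨i, rfl⟩
  have self (g : N34) : cmt g g ∈ Subgroup.closure (Set.range derivedGen) := by
    rw [cmt_eq_one_iff.2 (.refl g)]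
    exact one_mem _
  have swap {g h : N34} (hgh : cmt g h ∈ Subgroup.closure (Set.range derivedGen)) :
      cmt h g ∈ Subgroup.closure (Set.range derivedGen) := cmt_inv g h ▸ inv_mem hgh
  rcases hs with rfl | rfl | rfl | rfl <;> rcases ht with rfl | rfl | rfl | rfl
  exacts [self _, mem (.inr 0), mem (.inl 0), mem (.inl 1), swap (mem (.inr 0)), self _,
    mem (.inl 2), mem (.inl 3), swap (mem (.inl 0)), swap (mem (.inl 2)), self _, mem (.inr 1),
    swap (mem (.inl 1)), swap (mem (.inl 3)), swap (mem (.inr 1)), self _]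

theorem isMulCommutative_closure_derivedGen :
    IsMulCommutative (Subgroup.closure (Set.range derivedGen)) := by
  refine Subgroup.isMulCommutative_closure ?_
  rintro _ ⟨i, rfl⟩ _ ⟨j | j, rfl⟩
  · obtain i | i := i
    · change Commute _ _
      fin_cases i <;> fin_cases j
      exacts [.refl _, commute_x_y, commute_x_z, commute_x_w, commute_x_y.symm, .refl _,
        commute_y_z, commute_w_y.symm, commute_x_z.symm, commute_y_z.symm, .refl _,
        commute_w_z.symm, commute_x_w.symm, commute_w_y, commute_w_z, .refl _]
    · exact (Subgroup.mem_center_iff.1 (derivedGen_inr_mem_center i) _).symm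
  · exact Subgroup.mem_center_iff.1 (derivedGen_inr_mem_center j) _

open N34Lie

theorem relations_exp {L : Type*} [LieRing L] [LieAlgebra ℚ L] [ThreeStepLie L] {a b c d : L}
    (h : N34LieRelations a b c d) :
    Relations (BCH.exp a) (BCH.exp b) (BCH.exp c) (BCH.exp d) := by
  have hab : ⁅⁅a, b⁆, a⁆ = 0 := by rw [← lie_skew, h.lie_a_ab, neg_zero]
  have hcd : ⁅⁅c, d⁆, c⁆ = 0 := by rw [← lie_skew, h.lie_c_cd, neg_zero]
  constructor <;>
    simp only [← cmt_eq_one_iff, mul_eq_one_iff_eq_inv, BCH.ext_iff, BCH.log_one, BCH.log_inv,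
      BCH.log_cmt_cmt, BCH.log_cmt_cmt_right]
  case ab => rw [BCH.log_cmt, hab, h.lie_ab_b, add_zero, smul_zero, add_zero, h.ab]
  case cd => rw [BCH.log_cmt, hcd, h.lie_cd_d, add_zero, smul_zero, add_zero, h.cd]
  exacts [h.lie_a_ab, h.lie_ab_b, h.lie_a_cd, h.lie_ad_d, h.lie_b_bc, h.lie_b_cd, h.lie_c_cd,
    h.lie_cd_d, h.abc, h.abd, h.aad, h.aac, h.acb, h.acc, h.adb]

/-! ### The embedding in the rational completion -/

/-- The embedding of `N_{3,4}` in its rational completion. -/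
noncomputable def toBCH : N34 →* BCH N34Lie :=
  PresentedGroup.toGroup (f := fun i => BCH.exp (e i))
    ((lift_eq_one_iff_relations _).2 (relations_exp e_relations))

theorem log_toBCH_of (i : Fin 4) : (toBCH (PresentedGroup.of i)).log = e i := by
  rw [toBCH, PresentedGroup.toGroup.of]

/-- The weight-one coordinates of the logarithm, as a homomorphism. -/
noncomputable def wt₁Hom : N34 →* Multiplicative (Fin 4 → ℚ) :=
  MonoidHom.mk' (fun g => .ofAdd (toBCH g).log.wt₁) fun g h => by
    simp [BCH.log_mul, wt₁_lie, ofAdd_add]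

theorem wt₁Hom_of (i : Fin 4) : wt₁Hom (PresentedGroup.of i) = .ofAdd (Pi.single i 1) := by
  simp [wt₁Hom, log_toBCH_of, e]

theorem mem_commutator_of_wt₁_log_eq_zero {g : N34} (hg : (toBCH g).log.wt₁ = 0) :
    g ∈ commutator N34 := by
  have hinj : Function.Injective (Abelianization.lift wt₁Hom) := by
    refine injective_of_linearIndependent (s := fun i => Abelianization.of (PresentedGroup.of i))
      ?_ ?_
    · rw [Set.range_comp', ← MonoidHom.map_closure, PresentedGroup.closure_range_of,
        ← MonoidHom.range_eq_map, MonoidHom.range_eq_top]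
      exact QuotientGroup.mk'_surjective _
    · simpa [wt₁Hom_of] using (Pi.linearIndependent_single_one (Fin 4) ℚ).restrict_scalars' ℤ
  rw [← Abelianization.ker_of, MonoidHom.mem_ker]
  exact (map_eq_one_iff _ hinj).1 hg

theorem wt₂_log_derivedGen_inl (i : Fin 4) :
    (toBCH (derivedGen (.inl i))).log.wt₂ = Pi.single i 1 := by
  have wt₂_log_cmt (i j : Fin 4) :
      (toBCH (cmt (PresentedGroup.of i) (PresentedGroup.of j))).log.wt₂ = ⁅e i, e j⁆.wt₂ := by
    simp [map_cmt, BCH.log_cmt, log_toBCH_of, wt₂_lie_lie, -lie_lie]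
  fin_cases i <;> [refine (wt₂_log_cmt 0 2).trans ?_; refine (wt₂_log_cmt 0 3).trans ?_;
    refine (wt₂_log_cmt 1 2).trans ?_; refine (wt₂_log_cmt 1 3).trans ?_] <;>
    ext k <;> fin_cases k <;> simp [wt₂_lie, minor, e]

theorem log_derivedGen_inr (j : Fin 5) :
    (toBCH (derivedGen (.inr j))).log = ⟨0, 0, Pi.single j 1⟩ := by
  have log_cmt_cmt (i j k : Fin 4) : (toBCH (cmt (cmt (PresentedGroup.of i) (PresentedGroup.of j))
      (PresentedGroup.of k))).log = ⁅⁅e i, e j⁆, e k⁆ := by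
    simp only [map_cmt, BCH.log_cmt_cmt, log_toBCH_of]
  have hu : (toBCH gu).log = ⁅⁅e 0, e 2⁆, e 2⁆ := cmt_x_c ▸ log_cmt_cmt 0 2 2
  have hv : (toBCH gv).log = -⁅⁅e 0, e 2⁆, e 0⁆ := by
    rw [← log_cmt_cmt, ← BCH.log_inv, ← map_inv, eq_comm, inv_eq_iff_eq_inv.2]
    exact cmt_x_a
  have hp : (toBCH gp).log = ⁅⁅e 0, e 2⁆, e 1⁆ := log_cmt_cmt 0 2 1
  have hq : (toBCH gq).log = ⁅⁅e 1, e 2⁆, e 2⁆ := cmt_z_c ▸ log_cmt_cmt 1 2 2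
  have hr : (toBCH gr).log = ⁅⁅e 0, e 3⁆, e 1⁆ := log_cmt_cmt 0 3 1
  fin_cases j <;> [refine hu.trans ?_; refine hv.trans ?_; refine hp.trans ?_; refine hq.trans ?_;
    refine hr.trans ?_] <;>
    ext k <;> fin_cases k <;>
    simp [wt₁_lie, wt₂_lie_lie, wt₃_lie_lie, minor, e, -lie_lie, -lie_skew]

theorem linearIndependent_log_derivedGen :
    LinearIndependent ℤ fun i => (toBCH (derivedGen i)).log := by
  refine Fintype.linearIndependent_iff.2 fun n hn => ?_
  rw [Fintype.sum_sum_type] at hn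
  obtain ⟨w₂, hw₂⟩ : ∃ w : N34Lie →+ (Fin 4 → ℚ), ∀ x, w x = x.wt₂ :=
    ⟨⟨⟨wt₂, rfl⟩, fun _ _ => rfl⟩, fun _ => rfl⟩
  obtain ⟨w₃, hw₃⟩ : ∃ w : N34Lie →+ (Fin 5 → ℚ), ∀ x, w x = x.wt₃ :=
    ⟨⟨⟨wt₃, rfl⟩, fun _ _ => rfl⟩, fun _ => rfl⟩
  have hl (i : Fin 4) : n (.inl i) = 0 := by
    have h := congrArg w₂ hn
    simp only [map_add, map_sum, map_zsmul, map_zero] at h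
    simp only [hw₂, wt₂_log_derivedGen_inl, log_derivedGen_inr, smul_zero, Finset.sum_const_zero,
      add_zero] at h
    simpa [Finset.sum_apply, Pi.single_apply] using congrFun h i
  have hr (j : Fin 5) : n (.inr j) = 0 := by
    have h := congrArg w₃ hn
    simp only [map_add, map_sum, map_zsmul, map_zero] at h
    simp only [hw₃, hl, log_derivedGen_inr, zero_smul, Finset.sum_const_zero, zero_add] at h
    simpa [Finset.sum_apply, Pi.single_apply] using congrFun h j
  rintro (i | j)
  exacts [hl i, hr j]

open scoped IsMulCommutative in
theorem toBCH_injective : Function.Injective toBCH := by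
  refine (injective_iff_map_eq_one toBCH).2 fun g hg => ?_
  have hgD : g ∈ Subgroup.closure (Set.range derivedGen) :=
    commutator_le_closure_derivedGen (mem_commutator_of_wt₁_log_eq_zero (by rw [hg]; rfl))
  have := isMulCommutative_closure_derivedGen
  let s (i : Fin 4 ⊕ Fin 5) : Subgroup.closure (Set.range derivedGen) :=
    ⟨derivedGen i, Subgroup.subset_closure ⟨i, rfl⟩⟩
  have hs : Subgroup.closure (Set.range s) = ⊤ := by
    rw [← Subgroup.closure_closure_coe_preimage (k := Set.range derivedGen)]
    congr 1
    ext
    simp [s, Subtype.ext_iff]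
  have hinj := injective_of_linearIndependent hs (T := BCH.logHom (toBCH.comp (Subgroup.subtype _)))
    linearIndependent_log_derivedGen
  exact congrArg Subtype.val ((injective_iff_map_eq_one _).1 hinj ⟨g, hgD⟩ (congrArg BCH.log hg))

theorem wt₁_log_of_mul_inv_mem_commutator {g : N34} {r : Fin 4 → ℤ}
    (hg : g * (ga ^ r 0 * gb ^ r 1 * gc ^ r 2 * gd ^ r 3)⁻¹ ∈ commutator N34) :
    (toBCH g).log.wt₁ = fun i => (r i : ℚ) := by
  have h : wt₁Hom g = wt₁Hom (ga ^ r 0 * gb ^ r 1 * gc ^ r 2 * gd ^ r 3) := by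
    rw [← mul_inv_eq_one, ← map_inv, ← map_mul]
    exact Abelianization.commutator_subset_ker wt₁Hom hg
  have hwt : (wt₁Hom g).toAdd = (toBCH g).log.wt₁ := rfl
  rw [← hwt, h]
  ext i
  simp only [map_mul, map_zpow, ga, gb, gc, gd, wt₁Hom_of, toAdd_mul, toAdd_zpow, toAdd_ofAdd]
  fin_cases i <;> simp

/-! ### Centralisers of powers of the generators -/

section PowersOfGenerators

variable {p : Fin 4 → ℕ}

theorem wt_log_eq_zero_of_commute_pow (hp : ∀ i, 0 < p i) {z : N34}
    (hz : ∀ i, Commute z (PresentedGroup.of i ^ p i)) :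
    (toBCH z).log.wt₁ = 0 ∧ (toBCH z).log.wt₂ = 0 := by
  refine wt_eq_zero_of_lie_e_eq_zero fun i => ?_
  have h := BCH.lie_log_eq_zero_of_commute ((hz i).map toBCH)
  rw [map_pow, BCH.log_pow, log_toBCH_of, lie_nsmul, ← Nat.cast_smul_eq_nsmul ℚ] at h
  exact (smul_eq_zero_iff_right (Nat.cast_ne_zero.2 (hp i).ne')).1 h

variable {H : Subgroup N34}

theorem exists_lieHom_log_toBCH_eq (f : H →* N34) (hp : ∀ i, 0 < p i)
    (hpH : ∀ i, PresentedGroup.of i ^ p i ∈ H) :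
    ∃ θ : N34Lie →ₗ⁅ℚ⁆ N34Lie, ∀ h : H, θ (toBCH h).log = (toBCH (f h)).log := by
  refine BCH.exists_lieHom_log_eq (toBCH.comp H.subtype) (toBCH.comp f)
    (toBCH_injective.comp Subtype.val_injective)
    (eq_top_iff.2 fun x _ => mem_of_forall_e_mem (fun i => ?_) x)
  have h : p i • e i ∈ LieSubalgebra.lieSpan ℚ N34Lie
      (Set.range fun g => ((toBCH.comp H.subtype) g).log) :=
    LieSubalgebra.subset_lieSpan
      ⟨⟨_, hpH i⟩, by simp [map_pow, BCH.log_pow, log_toBCH_of]⟩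
  rw [← Nat.cast_smul_eq_nsmul ℚ] at h
  exact (Submodule.smul_mem_iff _ (Nat.cast_ne_zero.2 (hp i).ne')).1 h

theorem map_eq_self_of_commute_pow (f : H →* N34) (hp : ∀ i, 0 < p i)
    (hpH : ∀ i, PresentedGroup.of i ^ p i ∈ H) {Nf : Matrix (Fin 4) (Fin 4) ℤ}
    (hNf : ∀ i, (toBCH (f ⟨_, hpH i⟩)).log.wt₁ = fun l => (Nf i l : ℚ)) (hdet : Nf.det ≠ 0)
    {z : H} (hz : ∀ i, Commute (z : N34) (PresentedGroup.of i ^ p i)) : f z = z := by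
  obtain ⟨θ, hθ⟩ := exists_lieHom_log_toBCH_eq f hp hpH
  have hp' (i : Fin 4) : (p i : ℚ) ≠ 0 := Nat.cast_ne_zero.2 (hp i).ne'
  have hrow (i : Fin 4) : (θ (e i)).wt₁ = fun l => (p i : ℚ)⁻¹ * Nf i l := by
    have h := congrArg wt₁ (hθ ⟨_, hpH i⟩)
    rw [hNf, map_pow, BCH.log_pow, log_toBCH_of, ← Nat.cast_smul_eq_nsmul ℚ, map_smul,
      wt₁_smul] at h
    exact (eq_inv_smul_iff₀ (hp' i)).2 h
  have hθdet : (Matrix.of fun i => (θ (e i)).wt₁).det = (∏ i, (p i : ℚ)⁻¹) * Nf.det := by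
    rw [Int.cast_det, ← Matrix.det_mul_column]
    exact congrArg _ (congrArg _ (funext hrow))
  have hθdet_ne_zero : (Matrix.of fun i => (θ (e i)).wt₁).det ≠ 0 := by
    rw [hθdet]
    exact mul_ne_zero (Finset.prod_ne_zero_iff.2 fun i _ => inv_ne_zero (hp' i))
      (Int.cast_ne_zero.2 hdet)
  obtain ⟨hz₁, hz₂⟩ := wt_log_eq_zero_of_commute_pow hp hz
  exact toBCH_injective
    (BCH.ext ((hθ z).symm.trans (map_eq_self_of_det_ne_zero θ hθdet_ne_zero hz₁ hz₂)))

end PowersOfGenerators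

end N34

theorem N34_center_invariant_of_det_ne_zero_general
    (H : Subgroup N34) (f : ↥H →* N34)
    (m n k j : ℕ) (hm : 0 < m) (hn : 0 < n) (hk : 0 < k) (hj : 0 < j)
    (ham : ga ^ m ∈ H) (hbn : gb ^ n ∈ H) (hck : gc ^ k ∈ H) (hdj : gd ^ j ∈ H)
    (K : Subgroup N34)
    (hK : K = Subgroup.closure {ga ^ m, gb ^ n, gc ^ k, gd ^ j})
    (Nf : Matrix (Fin 4) (Fin 4) ℤ)
    (hfa : f ⟨ga ^ m, ham⟩ *
      (ga ^ Nf 0 0 * gb ^ Nf 0 1 * gc ^ Nf 0 2 * gd ^ Nf 0 3)⁻¹ ∈ commutator N34)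
    (hfb : f ⟨gb ^ n, hbn⟩ *
      (ga ^ Nf 1 0 * gb ^ Nf 1 1 * gc ^ Nf 1 2 * gd ^ Nf 1 3)⁻¹ ∈ commutator N34)
    (hfc : f ⟨gc ^ k, hck⟩ *
      (ga ^ Nf 2 0 * gb ^ Nf 2 1 * gc ^ Nf 2 2 * gd ^ Nf 2 3)⁻¹ ∈ commutator N34)
    (hfd : f ⟨gd ^ j, hdj⟩ *
      (ga ^ Nf 3 0 * gb ^ Nf 3 1 * gc ^ Nf 3 2 * gd ^ Nf 3 3)⁻¹ ∈ commutator N34)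
    (hdet : Nf.det ≠ 0) (z : H) (hz : (z : N34) ∈ Subgroup.map K.subtype (Subgroup.center ↥K)) :
    f z = z := by
  have hp : ∀ i, 0 < ![m, n, k, j] i := by simp [Fin.forall_fin_succ, hm, hn, hk, hj]
  have hpH : ∀ i, PresentedGroup.of i ^ ![m, n, k, j] i ∈ H := by
    intro i
    fin_cases i
    exacts [ham, hbn, hck, hdj]
  have hpK : ∀ i, PresentedGroup.of i ^ ![m, n, k, j] i ∈ K := by
    rw [hK]
    intro i
    apply Subgroup.subset_closure
    fin_cases i <;> simp [ga, gb, gc, gd]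
  refine N34.map_eq_self_of_commute_pow f hp hpH (fun i => ?_) hdet fun i => ?_
  · fin_cases i
    exacts [N34.wt₁_log_of_mul_inv_mem_commutator hfa, N34.wt₁_log_of_mul_inv_mem_commutator hfb,
      N34.wt₁_log_of_mul_inv_mem_commutator hfc, N34.wt₁_log_of_mul_inv_mem_commutator hfd]
  · obtain ⟨κ, hκ, hκz⟩ := hz
    rw [← hκz]
    exact (congrArg Subtype.val (Subgroup.mem_center_iff.1 hκ ⟨_, hpK i⟩)).symm

/-- Let `f : H → N_{3,4}` be a virtual endomorphism of `G = N_{3,4}`, let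
`K = ⟨aᵐ, bⁿ, cᵏ, dʲ⟩ ≤ H`, and let `Nf` be the `4 × 4` integer exponent matrix of `f`
(recording the images of `aᵐ, bⁿ, cᵏ, dʲ` modulo `G'`). If `det Nf ≠ 0`, then
`f(Z(K)) ≤ Z(K)`. -/
theorem N34_center_invariant_of_det_ne_zero
    (H : Subgroup N34) (hH : H.FiniteIndex) (f : ↥H →* N34)
    (m n k j : ℕ) (hm : 0 < m) (hn : 0 < n) (hk : 0 < k) (hj : 0 < j)
    (ham : ga ^ m ∈ H) (hbn : gb ^ n ∈ H) (hck : gc ^ k ∈ H) (hdj : gd ^ j ∈ H)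
    (K : Subgroup N34)
    (hK : K = Subgroup.closure {ga ^ m, gb ^ n, gc ^ k, gd ^ j})
    (hKH : K ≤ H)
    (Nf : Matrix (Fin 4) (Fin 4) ℤ)
    (hfa : f ⟨ga ^ m, ham⟩ *
      (ga ^ Nf 0 0 * gb ^ Nf 0 1 * gc ^ Nf 0 2 * gd ^ Nf 0 3)⁻¹ ∈ commutator N34)
    (hfb : f ⟨gb ^ n, hbn⟩ *
      (ga ^ Nf 1 0 * gb ^ Nf 1 1 * gc ^ Nf 1 2 * gd ^ Nf 1 3)⁻¹ ∈ commutator N34)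
    (hfc : f ⟨gc ^ k, hck⟩ *
      (ga ^ Nf 2 0 * gb ^ Nf 2 1 * gc ^ Nf 2 2 * gd ^ Nf 2 3)⁻¹ ∈ commutator N34)
    (hfd : f ⟨gd ^ j, hdj⟩ *
      (ga ^ Nf 3 0 * gb ^ Nf 3 1 * gc ^ Nf 3 2 * gd ^ Nf 3 3)⁻¹ ∈ commutator N34)
    (hdet : Nf.det ≠ 0) :
    Subgroup.map f ((Subgroup.map K.subtype (Subgroup.center ↥K)).subgroupOf H)
      ≤ Subgroup.map K.subtype (Subgroup.center ↥K) := by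
  rintro _ ⟨z, hz, rfl⟩
  rwa [N34_center_invariant_of_det_ne_zero_general H f m n k j hm hn hk hj ham hbn hck hdj K hK Nf
    hfa hfb hfc hfd hdet z hz]
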